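/- Let k be a positive integer, let ℓ = (2k+3)·(2k+6), and let N = 2^{2((k+1)·log₂ℓ + ℓ·log₂(k+2))} + 2. Then every graph G in obs_{≤si}(C_k) has at most N^{k+1} vertices and at most (k+1)·N^{k+1} edges; in particular, every vertex of G has degree at most 2(k+1). -/

import Mathlib

/-- A finite undirected multigraph without loops. -/
structure Multigraph where
  V : Type
  E : Type
  finV : Finite V
  finE : Finite E
  ends : E → V × V
  loopless : ∀ e, (ends e).1 ≠ (ends e).2

attribute [instance] Multigraph.finV Multigraph.finE

namespace Multigraph

/-- `δ_G(S)`: the number of edges of `G` with exactly one endpoint in `S`. -/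
noncomputable def delta (G : Multigraph) (S : Set G.V) : ℕ :=
  {e : G.E | ¬ ((G.ends e).1 ∈ S ↔ (G.ends e).2 ∈ S)}.ncard

/-- The width `cw_σ(G)` of an ordering, represented as an injective ranking `ρ : V → ℕ`. -/
noncomputable def cwOrd (G : Multigraph) (ρ : G.V → ℕ) : ℕ :=
  sSup {w | ∃ v : G.V, w = G.delta {u | ρ u ≤ ρ v}}

/-- The cutwidth of a multigraph. -/
noncomputable def cutwidth (G : Multigraph) : ℕ :=
  sInf {w | ∃ ρ : G.V → ℕ, Function.Injective ρ ∧ G.cwOrd ρ = w}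

/-- Walks in a multigraph. -/
inductive Walk (G : Multigraph) : G.V → G.V → Type
  | nil (v : G.V) : Walk G v v
  | cons {u v w : G.V} (e : G.E)
      (h : G.ends e = (u, v) ∨ G.ends e = (v, u)) (p : Walk G v w) : Walk G u w

namespace Walk

def edges {G : Multigraph} : ∀ {u v : G.V}, G.Walk u v → List G.E
  | _, _, .nil _ => []
  | _, _, .cons e _ p => e :: p.edges

def support {G : Multigraph} : ∀ {u v : G.V}, G.Walk u v → List G.V
  | _, _, .nil v => [v]
  | u, _, .cons _ _ p => u :: p.support

end Walk

def Connected (G : Multigraph) : Prop := ∀ u v : G.V, Nonempty (G.Walk u v)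

/-- An immersion model of `H` in `G`. -/
structure ImmersionModel (H G : Multigraph) where
  vmap : H.V → G.V
  inj : Function.Injective vmap
  emap : (e : H.E) → G.Walk (vmap (H.ends e).1) (vmap (H.ends e).2)
  isPath : ∀ e, ((emap e).support).Nodup
  edgeDisj : ∀ e e', e ≠ e' → ∀ f, f ∈ (emap e).edges → f ∉ (emap e').edges

/-- `H ≤_i G`. -/
def Immersion (H G : Multigraph) : Prop := Nonempty (ImmersionModel H G)

/-- A strong immersion model: no internal vertex of a path is a branch vertex. -/
structure StrongImmersionModel (H G : Multigraph) extends ImmersionModel H G where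
  strong : ∀ e, ∀ x, x ∈ (emap e).support →
    x ≠ vmap (H.ends e).1 → x ≠ vmap (H.ends e).2 → x ∉ Set.range vmap

/-- `H ≤_si G`. -/
def StrongImmersion (H G : Multigraph) : Prop := Nonempty (StrongImmersionModel H G)

/-- Isomorphism of multigraphs. -/
structure Iso (G H : Multigraph) where
  fv : G.V ≃ H.V
  fe : G.E ≃ H.E
  pres : ∀ e, H.ends (fe e) = (fv (G.ends e).1, fv (G.ends e).2)
           ∨ H.ends (fe e) = (fv (G.ends e).2, fv (G.ends e).1)

def Isomorphic (G H : Multigraph) : Prop := Nonempty (Iso G H)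

/-- The minimal obstruction set of a class `C` with respect to a partial order `le`. -/
def obstructions (le : Multigraph → Multigraph → Prop) (C : Set Multigraph) :
    Set Multigraph :=
  {G | G ∉ C ∧ ∀ G', le G' G → ¬ G'.Isomorphic G → G' ∈ C}

/-- `C_k`: the class of multigraphs of cutwidth at most `k`. -/
def cutwidthClass (k : ℕ) : Set Multigraph := {G | G.cutwidth ≤ k}

/-- The degree of a vertex (each parallel edge counts once at each endpoint). -/
noncomputable def degree (G : Multigraph) (v : G.V) : ℕ :=
  {e : G.E | (G.ends e).1 = v ∨ (G.ends e).2 = v}.ncard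

/-- The number of `A`-blocks of an ordering `ρ`: the number of maximal runs of
consecutive (in `ρ`) vertices belonging to `A`, counted via block-starting vertices. -/
noncomputable def blockCount (G : Multigraph) (ρ : G.V → ℕ) (A : Set G.V) : ℕ :=
  {v : G.V | v ∈ A ∧ ∀ u : G.V, ρ u < ρ v →
      ∃ w : G.V, w ∉ A ∧ ρ u ≤ ρ w ∧ ρ w < ρ v}.ncard

/-- The extension `G*` of a `k`-boundaried graph `(G, x)`. -/
def extension (G : Multigraph) {k : ℕ} (x : Fin k → G.V) : Multigraph where
  V := G.V ⊕ Fin k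
  E := G.E ⊕ Fin k
  finV := inferInstance
  finE := inferInstance
  ends := Sum.elim (fun e => (Sum.inl (G.ends e).1, Sum.inl (G.ends e).2))
                   (fun i => (Sum.inl (x i), Sum.inr i))
  loopless := by
    rintro (e | i)
    · simpa using G.loopless e
    · simp

/-- The join `𝐀 ⊕ 𝐁` of two `k`-boundaried graphs. -/
def join {k : ℕ} (A B : Multigraph) (x : Fin k → A.V) (y : Fin k → B.V) : Multigraph where
  V := A.V ⊕ B.V
  E := (A.E ⊕ B.E) ⊕ Fin k
  finV := inferInstance
  finE := inferInstance
  ends := Sum.elim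
    (Sum.elim (fun e => (Sum.inl (A.ends e).1, Sum.inl (A.ends e).2))
              (fun e => (Sum.inr (B.ends e).1, Sum.inr (B.ends e).2)))
    (fun i => (Sum.inl (x i), Sum.inr (y i)))
  loopless := by
    rintro ((e | e) | i)
    · simpa using A.loopless e
    · simpa using B.loopless e
    · simp

/-- An `ℓ`-bucketing of an ordering `ρ` (buckets indexed 1,…,ℓ). -/
def IsBucketing (G : Multigraph) (ρ : G.V → ℕ) (ℓ : ℕ) (T : G.V → ℕ) : Prop :=
  (∀ v, 1 ≤ T v ∧ T v ≤ ℓ) ∧ ∀ u v : G.V, ρ u ≤ ρ v → T u ≤ T v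

/-- `width(G,σ,T,i)`: the maximum size of a cut in `cuts(G,σ,T,i)`; these cuts
are described by their left side `S`, which contains all buckets before `i`,
a `σ`-downward-closed part of bucket `i`, and nothing else. -/
noncomputable def bucketWidth (G : Multigraph) (ρ : G.V → ℕ) (T : G.V → ℕ) (i : ℕ) : ℕ :=
  sSup {w | ∃ S : Set G.V,
    (∀ v, T v < i → v ∈ S) ∧ (∀ v ∈ S, T v ≤ i) ∧
    (∀ u v : G.V, T u = i → T v = i → ρ u ≤ ρ v → v ∈ S → u ∈ S) ∧
    w = G.delta S}

/-- A `(k,ℓ)`-bucket interface. -/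
structure BucketInterface (k ℓ : ℕ) where
  b : Fin k → ℕ
  b' : Fin k → ℕ
  mu : ℕ → ℕ
  mu' : ℕ → ℕ
  b_mem : ∀ i, b i ∈ Set.Icc 1 ℓ
  b'_mem : ∀ i, b' i ∈ Set.Icc 1 ℓ
  mu_le : ∀ j, mu j ≤ k
  mu'_le : ∀ j, mu' j ≤ k

/-- A `k`-boundaried graph `(G, x)` conforms with a `(k,ℓ)`-bucket interface. -/
def Conforms {k : ℕ} (G : Multigraph) (x : Fin k → G.V) (ℓ : ℕ)
    (I : BucketInterface k ℓ) : Prop :=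
  ∃ ρ : (G.extension x).V → ℕ, Function.Injective ρ ∧
  ∃ T : (G.extension x).V → ℕ, (G.extension x).IsBucketing ρ ℓ T ∧
    (∀ v : G.V, Odd (T (Sum.inl v))) ∧
    (∀ i : Fin k, Even (T (Sum.inr i))) ∧
    (∀ i : Fin k, T (Sum.inl (x i)) = I.b i) ∧
    (∀ i : Fin k, T (Sum.inr i) = I.b' i) ∧
    (∀ j ∈ Set.Icc 1 ℓ,
      G.bucketWidth (fun v => ρ (Sum.inl v)) (fun v => T (Sum.inl v)) j ≤ I.mu j) ∧
    (∀ j ∈ Set.Icc 1 ℓ, (G.extension x).bucketWidth ρ T j ≤ I.mu' j)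

/-- `m` pairwise edge-disjoint paths between the sets `X` and `Y`. -/
def ConnectorBetween (G : Multigraph) (X Y : Set G.V) (m : ℕ) : Prop :=
  ∃ (s t : Fin m → G.V) (P : (i : Fin m) → G.Walk (s i) (t i)),
    (∀ i, s i ∈ X) ∧ (∀ i, t i ∈ Y) ∧ (∀ i, (P i).support.Nodup) ∧
    ∀ i j, i ≠ j → ∀ f, f ∈ (P i).edges → f ∉ (P j).edges

/-- A linked ordering. -/
def Linked (G : Multigraph) (ρ : G.V → ℕ) : Prop :=
  ∀ u u' : G.V, ρ u ≤ ρ u' →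
    G.ConnectorBetween {z | ρ z ≤ ρ u} {z | ¬ ρ z ≤ ρ u'}
      (sInf {w | ∃ v : G.V, ρ u ≤ ρ v ∧ ρ v ≤ ρ u' ∧ w = G.delta {z | ρ z ≤ ρ v}})

/-- The multigraph obtained by deleting a set of edges. -/
def deleteEdges (G : Multigraph) (F : Set G.E) : Multigraph where
  V := G.V
  E := {e : G.E // e ∉ F}
  finV := G.finV
  finE := inferInstance
  ends e := G.ends e.1
  loopless e := G.loopless e.1

/-- `dcw_k(G)`: minimum number of edges to delete to reach cutwidth at most `k`. -/
noncomputable def dcw (k : ℕ) (G : Multigraph) : ℕ :=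
  sInf {w | ∃ F : Set G.E, (G.deleteEdges F).cutwidth ≤ k ∧ F.ncard = w}

/-- The class `C_{w,k}`. -/
def dcwClass (w k : ℕ) : Set Multigraph := {G | dcw k G ≤ w}

/-- Induced subgraph `G[X]`. -/
def induce (G : Multigraph) (X : Set G.V) : Multigraph where
  V := X
  E := {e : G.E // (G.ends e).1 ∈ X ∧ (G.ends e).2 ∈ X}
  finV := inferInstance
  finE := inferInstance
  ends e := (⟨(G.ends e.1).1, e.2.1⟩, ⟨(G.ends e.1).2, e.2.2⟩)
  loopless := by
    intro e h
    exact G.loopless e.1 (Subtype.ext_iff.mp h)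

/-- A graph is `ℋ`-immersion-free if it contains no member of `ℋ` as an immersion. -/
def ImmersionFree (H : Set Multigraph) (G : Multigraph) : Prop :=
  ∀ X ∈ H, ¬ Immersion X G

/-- `aic_ℋ(G)`: minimum number of edge deletions to reach an `ℋ`-immersion-free graph. -/
noncomputable def aic (H : Set Multigraph) (G : Multigraph) : ℕ :=
  sInf {w | ∃ F : Set G.E, ImmersionFree H (G.deleteEdges F) ∧ F.ncard = w}

/-- The class `C_{w,ℋ}`. -/
def aicClass (w : ℕ) (H : Set Multigraph) : Set Multigraph := {G | aic H G ≤ w}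

/-- `ℋ` is a `≤_i`-antichain. -/
def IsAntichainImm (H : Set Multigraph) : Prop :=
  ∀ G₁ ∈ H, ∀ G₂ ∈ H, Immersion G₁ G₂ → Isomorphic G₁ G₂

/-- Disjoint union of two multigraphs. -/
def disjUnion (G H : Multigraph) : Multigraph where
  V := G.V ⊕ H.V
  E := G.E ⊕ H.E
  finV := inferInstance
  finE := inferInstance
  ends := Sum.elim (fun e => (Sum.inl (G.ends e).1, Sum.inl (G.ends e).2))
                   (fun e => (Sum.inr (H.ends e).1, Sum.inr (H.ends e).2))
  loopless := by
    rintro (e | e)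
    · simpa using G.loopless e
    · simpa using H.loopless e

/-- Disjoint union of a finite family of multigraphs. -/
def sigmaUnion {m : ℕ} (Gs : Fin m → Multigraph) : Multigraph where
  V := Σ i, (Gs i).V
  E := Σ i, (Gs i).E
  finV := inferInstance
  finE := inferInstance
  ends e := (⟨e.1, ((Gs e.1).ends e.2).1⟩, ⟨e.1, ((Gs e.1).ends e.2).2⟩)
  loopless := by
    intro e h
    exact (Gs e.1).loopless e.2 (by simpa using h)

/-- `cw_σ(G,X) = δ_G(X) + cw_{σ_X}(G[X])`. -/
noncomputable def cwRel (G : Multigraph) (ρ : G.V → ℕ) (X : Set G.V) : ℕ :=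
  G.delta X + (G.induce X).cwOrd (fun v => ρ v.val)

/-- Membership in the family of prefixes relevant to `X`-linkedness: the complement
of `X` (the prefix right before `X` starts) and the prefixes ending inside `X`. -/
def IsXPrefix (G : Multigraph) (ρ : G.V → ℕ) (X : Set G.V) (P : Set G.V) : Prop :=
  P = Xᶜ ∨ ∃ v ∈ X, P = {z | ρ z ≤ ρ v}

/-- An `X`-linked ordering. -/
def XLinked (G : Multigraph) (ρ : G.V → ℕ) (X : Set G.V) : Prop :=
  (∀ u v : G.V, u ∉ X → v ∈ X → ρ u < ρ v) ∧
  ∀ P P' : Set G.V, G.IsXPrefix ρ X P → G.IsXPrefix ρ X P' → P ⊆ P' →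
    G.ConnectorBetween P P'ᶜ
      (sInf {w | ∃ Q : Set G.V, G.IsXPrefix ρ X Q ∧ P ⊆ Q ∧ Q ⊆ P' ∧ w = G.delta Q})

end Multigraph

/-!
Deleting an edge of a minimal obstruction `G` yields cutwidth at most `k`, so `G` itself has an
ordering of width at most `k + 1`; this bounds the degrees, and the edges in terms of the vertices.
The ordering can be chosen linked: exchanging a segment with a smaller cut would improve it. If `G`
had too many vertices, then, the cuts along the ordering taking few values, there would be a long
chain of initial segments `P₀ ⊂ P₁ ⊂ ⋯` with cuts of the same size `t`, none of them separated from
another by fewer than `t` edges, so that Menger's theorem links consecutive ones by `t`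
edge-disjoint paths.

Gluing the left part of `Pᵢ` to the right part of `Pᵢ₊₁` along the linkage yields a proper strong
immersion of `G`, which has cutwidth at most `k`. Its optimal orderings can be taken to alternate
boundedly often between the two parts, for otherwise two neighbouring blocks could trade places. So
what one part has to know about the other is recorded by one of boundedly many interfaces. The
linkage shows that an interface admitted by the left part of `Pᵢ₊₁` is admitted by that of `Pᵢ`, and
the glued graph provides one that is lost in passing from `Pᵢ` to `Pᵢ₊₁`. Hence the chain is no
longer than the number of interfaces.
-/

namespace Multigraph

open Function Set

variable {G : Multigraph} {α β : Type*} [LinearOrder α] [LinearOrder β] {k : ℕ}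

/-! ### Cuts -/

/-- The edge `e` joins `u` and `v`, in either orientation. -/
def IsLink (G : Multigraph) (e : G.E) (u v : G.V) : Prop :=
  G.ends e = (u, v) ∨ G.ends e = (v, u)

/-- The set of edges counted by `delta G S`. -/
def cut (G : Multigraph) (S : Set G.V) : Set G.E :=
  {e | ¬((G.ends e).1 ∈ S ↔ (G.ends e).2 ∈ S)}

theorem ncard_cut (S : Set G.V) : (G.cut S).ncard = G.delta S := rfl

theorem isLink_ends (e : G.E) : G.IsLink e (G.ends e).1 (G.ends e).2 := Or.inl rfl

theorem IsLink.symm {e : G.E} {u v : G.V} (h : G.IsLink e u v) : G.IsLink e v u := Or.symm h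

theorem IsLink.mem_cut_iff {e : G.E} {u v : G.V} (h : G.IsLink e u v) {S : Set G.V} :
    e ∈ G.cut S ↔ ¬(u ∈ S ↔ v ∈ S) := by
  rcases h with h | h <;> simp [cut, h, iff_comm]

theorem mem_cut_iff_exists {e : G.E} {S : Set G.V} :
    e ∈ G.cut S ↔ ∃ u v, G.IsLink e u v ∧ u ∈ S ∧ v ∉ S := by
  refine ⟨fun he ↦ ?_, fun ⟨u, v, h, hu, hv⟩ ↦ h.mem_cut_iff.2 (by tauto)⟩
  have hl := G.isLink_ends e
  have := hl.mem_cut_iff.1 he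
  by_cases h : (G.ends e).1 ∈ S
  · exact ⟨_, _, hl, h, by tauto⟩
  · exact ⟨_, _, hl.symm, by tauto, h⟩

theorem delta_empty : G.delta ∅ = 0 := by simp [delta]

theorem delta_univ : G.delta univ = 0 := by simp [delta]

theorem delta_inter_add_delta_union_le (X Y : Set G.V) :
    G.delta (X ∩ Y) + G.delta (X ∪ Y) ≤ G.delta X + G.delta Y := by
  have hunion : G.cut (X ∩ Y) ∪ G.cut (X ∪ Y) ⊆ G.cut X ∪ G.cut Y := by
    intro e; simp only [cut, mem_union, mem_inter_iff, mem_ofPred_eq]; tauto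
  have hinter : G.cut (X ∩ Y) ∩ G.cut (X ∪ Y) ⊆ G.cut X ∩ G.cut Y := by
    intro e; simp only [cut, mem_union, mem_inter_iff, mem_ofPred_eq]; tauto
  simp only [← ncard_cut]
  rw [← ncard_union_add_ncard_inter, ← ncard_union_add_ncard_inter (G.cut X)]
  gcongr <;> exact toFinite _

theorem delta_add_delta_le {X Y : Set G.V}
    (h : ∀ e u v, G.IsLink e u v → u ∈ X \ Y → v ∉ Y \ X) :
    G.delta X + G.delta Y ≤ G.delta (X ∩ Y) + G.delta (X ∪ Y) := by
  have key (e : G.E) := And.intro (h e _ _ (G.isLink_ends e)) (h e _ _ (G.isLink_ends e).symm)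
  have hunion : G.cut X ∪ G.cut Y ⊆ G.cut (X ∩ Y) ∪ G.cut (X ∪ Y) := by
    intro e; have := key e
    simp only [cut, mem_union, mem_inter_iff, mem_sdiff, mem_ofPred_eq] at this ⊢; tauto
  have hinter : G.cut X ∩ G.cut Y ⊆ G.cut (X ∩ Y) ∩ G.cut (X ∪ Y) := by
    intro e; have := key e
    simp only [cut, mem_union, mem_inter_iff, mem_sdiff, mem_ofPred_eq] at this ⊢; tauto
  simp only [← ncard_cut]
  rw [← ncard_union_add_ncard_inter, ← ncard_union_add_ncard_inter (G.cut (X ∩ Y))]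
  gcongr <;> exact toFinite _

/-! ### Widths of orderings -/

/-- The ordering of `G` given by the injective ranking `ρ` has width at most `k`. Rankings take
values in an arbitrary linear order, so that orderings can be spliced lexicographically. -/
def WidthLE (G : Multigraph) (ρ : G.V → α) (k : ℕ) : Prop :=
  Injective ρ ∧ ∀ v, G.delta {u | ρ u ≤ ρ v} ≤ k

/-- `P` consists of the vertices ranked below some threshold. -/
def IsInitial (ρ : G.V → α) (P : Set G.V) : Prop :=
  ∀ u v, ρ u ≤ ρ v → v ∈ P → u ∈ P

theorem isInitial_le {ρ : G.V → α} (a : α) : IsInitial ρ {u | ρ u ≤ a} :=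
  fun _ _ huv hv ↦ huv.trans hv

theorem isInitial_lt {ρ : G.V → α} (a : α) : IsInitial ρ {u | ρ u < a} :=
  fun _ _ huv hv ↦ huv.trans_lt hv

theorem IsInitial.eq_empty_or_eq_le {ρ : G.V → α} {P : Set G.V} (hP : IsInitial ρ P) :
    P = ∅ ∨ ∃ v ∈ P, P = {u | ρ u ≤ ρ v} := by
  refine P.eq_empty_or_nonempty.imp_right fun hne ↦ ?_
  obtain ⟨v, hv, hmax⟩ := exists_max_image P ρ P.toFinite hne
  exact ⟨v, hv, Subset.antisymm hmax fun u hu ↦ hP u v hu hv⟩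

theorem WidthLE.delta_le {ρ : G.V → α} (h : G.WidthLE ρ k) {P : Set G.V} (hP : IsInitial ρ P) :
    G.delta P ≤ k := by
  obtain rfl | ⟨v, -, rfl⟩ := hP.eq_empty_or_eq_le
  · simp [delta_empty]
  · exact h.2 v

theorem WidthLE.of_le_iff_le {ρ : G.V → α} {σ : G.V → β} (h : G.WidthLE ρ k)
    (hσ : ∀ u v, σ u ≤ σ v ↔ ρ u ≤ ρ v) : G.WidthLE σ k := by
  refine ⟨fun u v huv ↦ h.1 ?_, fun v ↦ by simpa only [hσ] using h.2 v⟩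
  exact le_antisymm ((hσ u v).1 huv.le) ((hσ v u).1 huv.ge)

theorem exists_equiv_fin {ρ : G.V → α} (hρ : Injective ρ) :
    ∃ e : G.V ≃ Fin (Nat.card G.V), ∀ u v, e u ≤ e v ↔ ρ u ≤ ρ v := by
  have := Fintype.ofFinite G.V
  let : LinearOrder G.V := LinearOrder.lift' ρ hρ
  let e := Fintype.orderIsoFinOfCardEq G.V Nat.card_eq_fintype_card.symm
  exact ⟨e.symm.toEquiv, fun u v ↦ e.symm.le_iff_le⟩

theorem exists_natRank {ρ : G.V → α} (hρ : Injective ρ) :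
    ∃ σ : G.V → ℕ, ∀ u v, σ u ≤ σ v ↔ ρ u ≤ ρ v := by
  obtain ⟨e, he⟩ := exists_equiv_fin hρ
  exact ⟨fun v ↦ e v, fun u v ↦ Fin.le_iff_val_le_val.symm.trans (he u v)⟩

theorem cwOrd_le_iff {ρ : G.V → ℕ} : G.cwOrd ρ ≤ k ↔ ∀ v, G.delta {u | ρ u ≤ ρ v} ≤ k := by
  have hrange : {w | ∃ v : G.V, w = G.delta {u | ρ u ≤ ρ v}} =
      range fun v ↦ G.delta {u | ρ u ≤ ρ v} := by ext; simp [eq_comm]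
  rw [cwOrd, hrange]
  obtain hV | hV := isEmpty_or_nonempty G.V
  · simp [range_eq_empty]
  · rw [csSup_le_iff (finite_range _).bddAbove (range_nonempty _)]
    simp

theorem cutwidth_le_iff : G.cutwidth ≤ k ↔ ∃ ρ : G.V → ℕ, G.WidthLE ρ k := by
  constructor
  · intro h
    obtain ⟨ρ, hρ, hw⟩ := Nat.sInf_mem (s := {w | ∃ ρ : G.V → ℕ, Injective ρ ∧ G.cwOrd ρ = w})
      ⟨_, _, Fin.val_injective.comp (Finite.equivFin G.V).injective, rfl⟩
    exact ⟨ρ, hρ, cwOrd_le_iff.1 (hw.le.trans h)⟩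
  · rintro ⟨ρ, hρ, hw⟩
    have hle : G.cutwidth ≤ G.cwOrd ρ := Nat.sInf_le ⟨ρ, hρ, rfl⟩
    exact hle.trans (cwOrd_le_iff.2 hw)

theorem WidthLE.cutwidth_le {ρ : G.V → α} (h : G.WidthLE ρ k) : G.cutwidth ≤ k := by
  obtain ⟨σ, hσ⟩ := exists_natRank h.1
  exact cutwidth_le_iff.2 ⟨σ, h.of_le_iff_le hσ⟩

/-! ### Linked orderings -/

open Classical in
/-- The ordering that lists the vertices of `S` first and is otherwise governed by `ρ`. -/
noncomputable def promote (S : Set G.V) (ρ : G.V → α) (v : G.V) : ℕ ×ₗ α :=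
  toLex (if v ∈ S then 0 else 1, ρ v)

theorem promote_injective {γ : Type*} (S : Set G.V) {ρ : G.V → γ} (hρ : Injective ρ) :
    Injective (promote S ρ) := fun u v huv ↦ hρ (by simp_all [promote])

theorem setOf_promote_le_of_mem {S : Set G.V} {ρ : G.V → α} {v : G.V} (hv : v ∈ S) :
    {u | promote S ρ u ≤ promote S ρ v} = {u | ρ u ≤ ρ v} ∩ S := by
  ext u
  by_cases hu : u ∈ S <;> simp [promote, Prod.Lex.toLex_le_toLex, hu, hv]

theorem setOf_promote_le_of_notMem {S : Set G.V} {ρ : G.V → α} {v : G.V} (hv : v ∉ S) :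
    {u | promote S ρ u ≤ promote S ρ v} = {u | ρ u ≤ ρ v} ∪ S := by
  ext u
  by_cases hu : u ∈ S <;> simp [promote, Prod.Lex.toLex_le_toLex, hu, hv]

/-- Between two initial segments, the smallest cut is attained by an initial segment. By Menger's
theorem this is the cut form of the linkedness of an ordering. -/
def CutLinked (G : Multigraph) (ρ : G.V → α) : Prop :=
  ∀ (P Q : Set G.V) (t : ℕ), IsInitial ρ P → IsInitial ρ Q →
    (∀ R, IsInitial ρ R → P ⊆ R → R ⊆ Q → t ≤ G.delta R) →
    ∀ S, P ⊆ S → S ⊆ Q → t ≤ G.delta S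

/-- Uncrossing `S` with the initial segment of `v` replaces `S` by a set that is again between `P`
and `Q`, and therefore has no smaller cut than `S`. -/
theorem delta_promote_le {ρ : G.V → α} {P Q S : Set G.V} (hP : IsInitial ρ P)
    (hQ : IsInitial ρ Q) (hPS : P ⊆ S) (hSQ : S ⊆ Q)
    (hmin : ∀ R, P ⊆ R → R ⊆ Q → G.delta S ≤ G.delta R) (v : G.V) :
    G.delta {u | promote S ρ u ≤ promote S ρ v} ≤ G.delta {u | ρ u ≤ ρ v} := by
  have hsub := G.delta_inter_add_delta_union_le {u | ρ u ≤ ρ v} S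
  by_cases hv : v ∈ S
  · have := hmin ({u | ρ u ≤ ρ v} ∪ S) (hPS.trans subset_union_right)
      (union_subset (fun u hu ↦ hQ u v hu (hSQ hv)) hSQ)
    rw [setOf_promote_le_of_mem hv]
    lia
  · have hPv : P ⊆ {u | ρ u ≤ ρ v} := fun p hp ↦
      (le_total (ρ p) (ρ v)).resolve_right fun hvp ↦ hv (hPS (hP v p hvp hp))
    have := hmin ({u | ρ u ≤ ρ v} ∩ S) (subset_inter hPv hPS) (inter_subset_right.trans hSQ)
    rw [setOf_promote_le_of_notMem hv]
    lia

theorem exists_delta_promote_lt {ρ : G.V → α} {P Q S : Set G.V} {t : ℕ} (hQ : IsInitial ρ Q)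
    (ht : ∀ R, IsInitial ρ R → P ⊆ R → R ⊆ Q → t ≤ G.delta R) (hPS : P ⊆ S) (hSQ : S ⊆ Q)
    (hS : G.delta S < t) :
    ∃ v, G.delta {u | promote S ρ u ≤ promote S ρ v} < G.delta {u | ρ u ≤ ρ v} := by
  have hne : S.Nonempty := by
    by_contra! hempty
    exact hS.not_ge (ht S (by simp [hempty, IsInitial]) hPS hSQ)
  obtain ⟨v, hv, hmax⟩ := exists_max_image S ρ S.toFinite hne
  have hSv : S ⊆ {u | ρ u ≤ ρ v} := hmax
  refine ⟨v, ?_⟩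
  rw [setOf_promote_le_of_mem hv, inter_eq_self_of_subset_right hSv]
  exact hS.trans_le
    (ht _ (isInitial_le _) (hPS.trans hSv) fun u hu ↦ hQ u v hu (hSQ hv))

theorem WidthLE.exists_cutLinked {ρ₀ : G.V → ℕ} (h₀ : G.WidthLE ρ₀ k) :
    ∃ ρ : G.V → ℕ, G.WidthLE ρ k ∧ G.CutLinked ρ := by
  have := Fintype.ofFinite G.V
  obtain ⟨ρ, hρ, hbest⟩ := exists_minimalFor_of_wellFoundedLT (fun ρ : G.V → ℕ ↦ G.WidthLE ρ k)
    (fun ρ ↦ ∑ v, G.delta {u | ρ u ≤ ρ v}) ⟨ρ₀, h₀⟩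
  refine ⟨ρ, hρ, fun P Q t hP hQ ht S' hPS' hS'Q ↦ ?_⟩
  by_contra! hS't
  obtain ⟨S, ⟨hPS, hSQ⟩, hmin⟩ := exists_minimalFor_of_wellFoundedLT
    (fun S ↦ P ⊆ S ∧ S ⊆ Q) G.delta ⟨S', hPS', hS'Q⟩
  have hminS (R : Set G.V) (hPR : P ⊆ R) (hRQ : R ⊆ Q) : G.delta S ≤ G.delta R :=
    (le_total _ _).elim id (hmin ⟨hPR, hRQ⟩)
  have hle := delta_promote_le hP hQ hPS hSQ hminS
  obtain ⟨v, hv⟩ := exists_delta_promote_lt hQ ht hPS hSQ ((hminS S' hPS' hS'Q).trans_lt hS't)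
  obtain ⟨σ, hσ⟩ := exists_natRank (promote_injective S hρ.1)
  have hwidth : G.WidthLE (promote S ρ) k :=
    ⟨promote_injective S hρ.1, fun v ↦ (hle v).trans (hρ.2 v)⟩
  have hlt : ∑ v, G.delta {u | σ u ≤ σ v} < ∑ v, G.delta {u | ρ u ≤ ρ v} := by
    simp only [hσ]
    exact Finset.sum_lt_sum (fun v _ ↦ hle v) ⟨v, Finset.mem_univ v, hv⟩
  exact hlt.not_ge (hbest (hwidth.of_le_iff_le hσ) hlt.le)

/-! ### Orderings with few buckets -/

/-- An ordering `ρ` of width at most `k` whose vertices are distributed, in order, into buckets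
`0, …, m - 1` in such a way that the even buckets hold exactly the vertices of `D`. -/
structure IsBucketedBy (G : Multigraph) (D : Set G.V) (k m : ℕ) (ρ T : G.V → ℕ) : Prop where
  width : G.WidthLE ρ k
  mono : ∀ u v, ρ u ≤ ρ v → T u ≤ T v
  even_iff : ∀ v, T v % 2 = 0 ↔ v ∈ D
  lt : ∀ v, T v < m

theorem exists_isBucketedBy (h : G.cutwidth ≤ k) (D : Set G.V) :
    ∃ m ρ T, G.IsBucketedBy D k m ρ T := by
  classical
  obtain ⟨ρ, hρ⟩ := cutwidth_le_iff.1 h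
  let T (v : G.V) : ℕ := 2 * ρ v + if v ∈ D then 0 else 1
  obtain ⟨b, hb⟩ := (finite_range T).bddAbove
  refine ⟨b + 1, ρ, T, hρ, fun u v huv ↦ ?_, fun v ↦ ?_,
    fun v ↦ Nat.lt_succ_of_le (hb (mem_range_self v))⟩
  · obtain heq | hlt := huv.eq_or_lt
    · rw [hρ.1 heq]
    · simp only [T]; split_ifs <;> lia
  · by_cases hv : v ∈ D <;> simp [T, hv]

/-- The renumbering of buckets that lets buckets `i` and `i + 1` trade places and merges them with
the buckets `i + 2` and `i - 1`, respectively. -/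
def swapBucket (i j : ℕ) : ℕ := if j < i + 1 then j else j - 2

/-- The ordering in which buckets `i` and `i + 1` have traded places. -/
def swapOrder (i : ℕ) (ρ T : G.V → ℕ) (v : G.V) : ℕ ×ₗ ℕ := toLex (swapBucket i (T v), ρ v)

theorem IsBucketedBy.delta_swapOrder_le {D : Set G.V} {m : ℕ} {ρ T : G.V → ℕ}
    (h : G.IsBucketedBy D k m ρ T) {i : ℕ} (hi : 1 ≤ i)
    (hup : G.delta {v | T v < i} ≤ G.delta {v | T v < i + 1})
    (hdown : G.delta {v | T v < i + 2} ≤ G.delta {v | T v < i + 1})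
    (hfree : ∀ e u v, G.IsLink e u v → T u = i + 1 → T v ≠ i) (v : G.V) :
    G.delta {u | swapOrder i ρ T u ≤ swapOrder i ρ T v} ≤ k := by
  set X : Set G.V := {u | swapOrder i ρ T u ≤ swapOrder i ρ T v}
  set R : Set G.V := {u | ρ u ≤ ρ v} with hR
  set C : Set G.V := {u | T u < i + 1} with hC
  have hRk : G.delta R ≤ k := h.width.2 v
  have hmono (u : G.V) := And.intro (h.mono u v) (h.mono v u)
  have hmemX (u : G.V) : u ∈ X ↔ swapBucket i (T u) < swapBucket i (T v) ∨
      swapBucket i (T u) = swapBucket i (T v) ∧ ρ u ≤ ρ v := Prod.Lex.toLex_le_toLex ..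
  have hsub : T v = i ∨ T v = i + 1 →
      G.delta X + G.delta C ≤ G.delta (X ∩ C) + G.delta (X ∪ C) := fun _ ↦
    delta_add_delta_le fun e u w he hu hw ↦ by
      simp only [hC, mem_sdiff, hmemX, swapBucket, mem_ofPred_eq] at hu hw
      exact hfree e u w he (by grind) (by grind)
  by_cases hv : T v = i
  · have hinter : X ∩ C = R := by
      ext u; simp only [hC, hR, mem_inter_iff, hmemX, swapBucket, mem_ofPred_eq]; grind
    have hunion : X ∪ C = {u | T u < i + 2} := by
      ext u; simp only [hC, mem_union, hmemX, swapBucket, mem_ofPred_eq]; grind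
    have := hsub (.inl hv)
    rw [hinter, hunion] at this
    lia
  by_cases hv' : T v = i + 1
  · have hinter : X ∩ C = {u | T u < i} := by
      ext u; simp only [hC, mem_inter_iff, hmemX, swapBucket, mem_ofPred_eq]; grind
    have hunion : X ∪ C = R := by
      ext u; simp only [hC, hR, mem_union, hmemX, swapBucket, mem_ofPred_eq]; grind
    have := hsub (.inr hv')
    rw [hinter, hunion] at this
    lia
  · have hXR : X = R := by
      ext u; simp only [hR, hmemX, swapBucket, mem_ofPred_eq]; grind
    rwa [hXR]

theorem IsBucketedBy.exists_swap {D : Set G.V} {m : ℕ} {ρ T : G.V → ℕ}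
    (h : G.IsBucketedBy D k m ρ T) {i : ℕ} (hi : 1 ≤ i) (him : i + 3 ≤ m)
    (hup : G.delta {v | T v < i} ≤ G.delta {v | T v < i + 1})
    (hdown : G.delta {v | T v < i + 2} ≤ G.delta {v | T v < i + 1})
    (hfree : ∀ e u v, G.IsLink e u v → T u = i + 1 → T v ≠ i) :
    ∃ ρ' T', G.IsBucketedBy D k (m - 2) ρ' T' := by
  have hinj : Injective (swapOrder i ρ T) := fun u v huv ↦
    h.width.1 (by simp_all [swapOrder])
  have hwidth : G.WidthLE (swapOrder i ρ T) k :=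
    ⟨hinj, h.delta_swapOrder_le hi hup hdown hfree⟩
  obtain ⟨σ, hσ⟩ := exists_natRank hinj
  refine ⟨σ, fun v ↦ swapBucket i (T v), hwidth.of_le_iff_le hσ, fun u v huv ↦ ?_,
    fun v ↦ ?_, fun v ↦ ?_⟩
  · exact ((Prod.Lex.toLex_le_toLex ..).1 ((hσ u v).1 huv)).elim le_of_lt fun h ↦ h.1.le
  · rw [← h.even_iff]; unfold swapBucket; split_ifs <;> lia
  · have := h.lt v; unfold swapBucket; split_ifs <;> lia

theorem exists_le_succ {s : ℕ → ℕ} (hs : ∀ i, s i ≤ k) (a : ℕ) :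
    ∃ i, a ≤ i ∧ i ≤ a + k ∧ s i ≤ s (i + 1) := by
  by_contra! hdesc
  have hsum (j : ℕ) (hj : j ≤ k + 1) : s (a + j) + j ≤ s a := by
    induction j with
    | zero => simp
    | succ j ih =>
      have := ih (by lia)
      have := hdesc (a + j) (by lia) (by lia)
      rw [← add_assoc]
      lia
  have := hsum (k + 1) le_rfl
  have := hs a
  lia

theorem exists_localMax {s : ℕ → ℕ} (hs : ∀ i, s i ≤ k) (a : ℕ) :
    ∃ i, a ≤ i ∧ i < a + (2 * k + 1) ∧ s i ≤ s (i + 1) ∧ s (i + 2) ≤ s (i + 1) := by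
  obtain ⟨b, hab, hba, hb⟩ := exists_le_succ hs a
  obtain ⟨c, hbc, hcb, hc⟩ := exists_le_succ (s := fun i ↦ k - s i) (fun i ↦ Nat.sub_le ..) (b + 1)
  have hdesc : ∃ i, b ≤ i ∧ s (i + 2) ≤ s (i + 1) := by
    refine ⟨c - 1, by lia, ?_⟩
    have := hs (c + 1)
    rw [show c - 1 + 2 = c + 1 by lia, show c - 1 + 1 = c by lia]
    lia
  classical
  obtain ⟨hbi, hi⟩ := Nat.find_spec hdesc
  have hmin (j : ℕ) (hj : j < Nat.find hdesc) (hbj : b ≤ j) : s (j + 1) < s (j + 2) := by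
    have := Nat.find_min hdesc hj
    lia
  refine ⟨Nat.find hdesc, by lia, ?_, ?_, hi⟩
  · by_contra! hlt
    have := hmin (c - 1) (by lia) (by lia)
    have := hs (c + 1)
    rw [show c - 1 + 2 = c + 1 by lia, show c - 1 + 1 = c by lia] at *
    lia
  · obtain heq | hlt := hbi.eq_or_lt
    · rwa [← heq]
    · have := hmin (Nat.find hdesc - 1) (by lia) (by lia)
      rw [show Nat.find hdesc - 1 + 2 = Nat.find hdesc + 1 by lia,
        show Nat.find hdesc - 1 + 1 = Nat.find hdesc by lia] at this
      exact this.le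

/-- A number of buckets that suffices for orderings of width `k` and a set `D` with `δ(D) ≤ d`:
among any `2 * k + 1` consecutive cuts between buckets there is a local maximum, and in a bucketing
with as few buckets as possible it is crossed by its own edge of the cut of `D`. -/
def numBuckets (k d : ℕ) : ℕ := (d + 1) * (2 * k + 1) + 2

theorem IsBucketedBy.exists_isLink {D : Set G.V} {m : ℕ} {ρ T : G.V → ℕ}
    (h : G.IsBucketedBy D k m ρ T) (hmin : ∀ ρ' T', ¬G.IsBucketedBy D k (m - 2) ρ' T')
    (a : ℕ) (ha : a + (2 * k + 1) + 3 ≤ m) :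
    ∃ i, a < i ∧ i ≤ a + (2 * k + 1) ∧ ∃ e u v, G.IsLink e u v ∧ T u = i + 1 ∧ T v = i := by
  have hinit (i : ℕ) : IsInitial ρ {v | T v < i} := fun u v huv hv ↦ (h.mono u v huv).trans_lt hv
  obtain ⟨i, hai, hia, hup, hdown⟩ :=
    exists_localMax (s := fun i ↦ G.delta {v | T v < i}) (fun i ↦ h.width.delta_le (hinit i))
      (a + 1)
  refine ⟨i, hai, by lia, ?_⟩
  by_contra! hfree
  obtain ⟨ρ', T', h'⟩ := h.exists_swap (by lia) (by lia) hup hdown hfree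
  exact hmin ρ' T' h'

theorem exists_isBucketedBy_numBuckets (h : G.cutwidth ≤ k) {D : Set G.V} {d : ℕ}
    (hD : G.delta D ≤ d) : ∃ ρ T, G.IsBucketedBy D k (numBuckets k d) ρ T := by
  obtain ⟨m, ⟨ρ, T, hT⟩, hm⟩ := exists_minimalFor_of_wellFoundedLT
    (fun m ↦ ∃ ρ T, G.IsBucketedBy D k m ρ T) id (exists_isBucketedBy h D)
  obtain hle | hlt := le_or_gt m (numBuckets k d)
  · exact ⟨ρ, T, hT.width, hT.mono, hT.even_iff, fun v ↦ (hT.lt v).trans_le hle⟩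
  have hmin (ρ' T' : G.V → ℕ) (h' : G.IsBucketedBy D k (m - 2) ρ' T') : False := by
    have : m ≤ m - 2 := hm ⟨ρ', T', h'⟩ (Nat.sub_le m 2)
    rw [numBuckets] at hlt
    lia
  have hcross (w : Fin (d + 1)) := hT.exists_isLink hmin (w * (2 * k + 1)) <| by
    have : (w + 1) * (2 * k + 1) ≤ (d + 1) * (2 * k + 1) := Nat.mul_le_mul_right _ w.2
    rw [numBuckets] at hlt
    lia
  choose i hwi hiw e u v he hu hv using hcross
  have hcut (w : Fin (d + 1)) : e w ∈ G.cut D := by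
    rw [(he w).mem_cut_iff, ← hT.even_iff, ← hT.even_iff, hu, hv]
    lia
  have hi : StrictMono i := fun w w' hww' ↦ by
    have : (w + 1 : ℕ) * (2 * k + 1) ≤ w' * (2 * k + 1) := Nat.mul_le_mul_right _ hww'
    have := hiw w
    have := hwi w'
    lia
  have hinj : Injective fun w ↦ (⟨e w, hcut w⟩ : G.cut D) := fun w w' hww' ↦ hi.injective <| by
    have hends := he w
    rw [Subtype.mk.inj hww'] at hends
    have := hu w; have := hu w'; have := hv w; have := hv w'
    rcases hends with h₁ | h₁ <;> rcases he w' with h₂ | h₂ <;> grind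
  have hcard := Nat.card_le_card_of_injective _ hinj
  rw [Nat.card_fin, Nat.card_coe_set_eq, ncard_cut] at hcard
  lia

/-! ### Walks and Menger's theorem -/

theorem Walk.start_mem_support {u v : G.V} (p : G.Walk u v) : u ∈ p.support := by
  cases p <;> simp [Walk.support]

theorem Walk.ends_mem_support {u v : G.V} (p : G.Walk u v) {e : G.E} (he : e ∈ p.edges)
    {x y : G.V} (hxy : G.IsLink e x y) : x ∈ p.support := by
  induction p with
  | nil v => simp [Walk.edges] at he
  | cons e' h p ih =>
    have := p.start_mem_support
    simp only [Walk.edges, Walk.support, List.mem_cons] at he ⊢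
    rcases he with rfl | he
    · rcases h with h | h <;> rcases hxy with hxy | hxy <;> grind
    · exact .inr (ih he)

theorem Walk.edges_nodup {u v : G.V} (p : G.Walk u v) (hp : p.support.Nodup) :
    p.edges.Nodup := by
  induction p with
  | nil v => exact List.nodup_nil
  | cons e h p ih =>
    rw [Walk.support, List.nodup_cons] at hp
    exact List.nodup_cons.2 ⟨fun he ↦ hp.1 (p.ends_mem_support he h), ih hp.2⟩

section Flow

attribute [local instance] Classical.propDecidable Fintype.ofFinite

/-- The sign of `e` when traversed starting from its end `u`, relative to the orientation of `e`
by `ends`. -/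
noncomputable def dirSign (G : Multigraph) (e : G.E) (u : G.V) : ℤ :=
  if (G.ends e).1 = u then 1 else -1

theorem dirSign_eq_or (e : G.E) (u : G.V) : G.dirSign e u = 1 ∨ G.dirSign e u = -1 := by
  unfold dirSign; split_ifs <;> simp

/-- The integral flow that sends one unit along a walk. -/
noncomputable def Walk.flow : ∀ {u v : G.V}, G.Walk u v → G.E → ℤ
  | _, _, .nil _ => 0
  | u, _, .cons e _ p => Pi.single e (G.dirSign e u) + p.flow

/-- Every step of the walk, traversing some `e` with sign `s`, satisfies `R e s`. -/
def Walk.AllSteps (R : G.E → ℤ → Prop) : ∀ {u v : G.V}, G.Walk u v → Prop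
  | _, _, .nil _ => True
  | u, _, .cons e _ p => R e (G.dirSign e u) ∧ p.AllSteps R

theorem Walk.flow_eq_zero {u v : G.V} (p : G.Walk u v) {e : G.E} (he : e ∉ p.edges) :
    p.flow e = 0 := by
  induction p with
  | nil v => rfl
  | cons e' h p ih =>
    rw [Walk.edges, List.mem_cons, not_or] at he
    simp [Walk.flow, he.1, ih he.2]

theorem Walk.AllSteps.flow {R : G.E → ℤ → Prop} {u v : G.V} {p : G.Walk u v} (hR : p.AllSteps R)
    (hp : p.edges.Nodup) {e : G.E} (he : e ∈ p.edges) : R e (p.flow e) := by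
  induction p with
  | nil v => simp [Walk.edges] at he
  | cons e' h p ih =>
    rw [Walk.edges, List.nodup_cons] at hp
    rcases List.mem_cons.1 he with rfl | he
    · simpa [Walk.flow, p.flow_eq_zero hp.1] using hR.1
    · have hne : e ≠ e' := fun heq ↦ hp.1 (heq ▸ he)
      simpa [Walk.flow, hne] using ih hR.2 hp.2 he

theorem Walk.flow_ne_zero {u v : G.V} (p : G.Walk u v) (hp : p.edges.Nodup) {e : G.E}
    (he : e ∈ p.edges) : p.flow e ≠ 0 := by
  have hall : p.AllSteps fun _ s ↦ s ≠ 0 := by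
    clear hp he
    induction p with
    | nil => trivial
    | @cons u _ _ e _ _ ih => exact ⟨by rcases G.dirSign_eq_or e u with h | h <;> simp [h], ih⟩
  exact hall.flow hp he

/-- The sign with which a unit of flow on `e` leaves `S`. -/
noncomputable def crossSign (S : Set G.V) (e : G.E) : ℤ :=
  S.indicator 1 (G.ends e).1 - S.indicator 1 (G.ends e).2

theorem IsLink.crossSign_eq {e : G.E} {u v : G.V} (h : G.IsLink e u v) (S : Set G.V) :
    crossSign S e = G.dirSign e u * (S.indicator 1 u - S.indicator 1 v) := by
  have := G.loopless e
  rcases h with h | h <;> simp_all [crossSign, dirSign]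

theorem crossSign_of_notMem_cut {e : G.E} {S : Set G.V} (he : e ∉ G.cut S) :
    crossSign S e = 0 := by
  by_cases h : (G.ends e).1 ∈ S <;> simp_all [crossSign, cut]

/-- The net amount of the flow `f` leaving `S`. -/
noncomputable def netOut (f : G.E → ℤ) (S : Set G.V) : ℤ := ∑ e, f e * crossSign S e

theorem netOut_add (f g : G.E → ℤ) (S : Set G.V) :
    netOut (f + g) S = netOut f S + netOut g S := by
  simp [netOut, add_mul, Finset.sum_add_distrib]

theorem netOut_flow {u v : G.V} (p : G.Walk u v) (S : Set G.V) :
    netOut p.flow S = S.indicator 1 u - S.indicator 1 v := by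
  induction p with
  | nil v => simp [netOut, Walk.flow]
  | @cons u v w e h p ih =>
    have hstep : netOut (Pi.single e (G.dirSign e u)) S = S.indicator 1 u - S.indicator 1 v := by
      rw [netOut, Finset.sum_eq_single e (fun e' _ hne ↦ by simp [hne]) (by simp),
        Pi.single_eq_same, IsLink.crossSign_eq h, ← mul_assoc]
      rcases G.dirSign_eq_or e u with hs | hs <;> simp [hs]
    rw [Walk.flow, netOut_add, hstep, ih]
    ring

theorem netOut_eq_delta {f : G.E → ℤ} {S : Set G.V}
    (h : ∀ e u v, G.IsLink e u v → u ∈ S → v ∉ S → f e = G.dirSign e u) :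
    netOut f S = G.delta S := by
  have hterm (e : G.E) : f e * crossSign S e = if e ∈ G.cut S then 1 else 0 := by
    split_ifs with he
    · obtain ⟨u, v, huv, hu, hv⟩ := mem_cut_iff_exists.1 he
      rw [huv.crossSign_eq, h e u v huv hu hv]
      rcases G.dirSign_eq_or e u with hs | hs <;> simp [hs, hu, hv]
    · rw [crossSign_of_notMem_cut he, mul_zero]
  simp only [netOut, hterm, Finset.sum_boole, ← ncard_cut, ncard_eq_toFinset_card']
  congr! 2
  ext; simp

theorem netOut_nonpos {f : G.E → ℤ} {S : Set G.V}
    (h : ∀ e u v, G.IsLink e u v → u ∈ S → v ∉ S → f e * G.dirSign e u ≤ 0) :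
    netOut f S ≤ 0 := by
  refine Finset.sum_nonpos fun e _ ↦ ?_
  by_cases he : e ∈ G.cut S
  · obtain ⟨u, v, huv, hu, hv⟩ := mem_cut_iff_exists.1 he
    simpa [huv.crossSign_eq, hu, hv] using h e u v huv hu hv
  · rw [crossSign_of_notMem_cut he, mul_zero]

theorem Walk.exists_suffix {R : G.E → ℤ → Prop} {u v : G.V} {p : G.Walk u v}
    (hR : p.AllSteps R) {A : Set G.V} (hA : ∃ x ∈ p.support, x ∈ A) :
    ∃ x ∈ A, ∃ q : G.Walk x v, q.AllSteps R ∧ q.support <:+ p.support ∧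
      ∀ y ∈ q.support, y ∈ A → y = x := by
  induction p with
  | nil v => exact ⟨v, by simpa [Walk.support] using hA, .nil v, hR, List.suffix_rfl,
      by simp [Walk.support]⟩
  | @cons u w v e h p ih =>
    by_cases hp : ∃ x ∈ p.support, x ∈ A
    · obtain ⟨x, hx, q, hqR, hq, hqA⟩ := ih hR.2 hp
      exact ⟨x, hx, q, hqR, hq.trans (List.suffix_cons ..), hqA⟩
    · push Not at hp
      have hu : u ∈ A := by
        obtain ⟨x, hx, hxA⟩ := hA
        rcases List.mem_cons.1 hx with rfl | hx
        · exact hxA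
        · exact absurd hxA (hp x hx)
      refine ⟨u, hu, .cons e h p, hR, List.suffix_rfl, fun y hy hyA ↦ ?_⟩
      exact (List.mem_cons.1 hy).resolve_right fun hy ↦ hp y hy hyA

theorem Walk.exists_path_until {R : G.E → ℤ → Prop} {u v : G.V} {p : G.Walk u v}
    (hR : p.AllSteps R) {B : Set G.V} (hv : v ∈ B) :
    ∃ w ∈ B, ∃ q : G.Walk u w, q.AllSteps R ∧ q.support.Nodup ∧
      ∀ y ∈ q.support, y ∈ B → y = w := by
  induction p with
  | nil v => exact ⟨v, hv, .nil v, hR, by simp [Walk.support], by simp [Walk.support]⟩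
  | @cons u x v e h p ih =>
    by_cases hu : u ∈ B
    · exact ⟨u, hu, .nil u, trivial, by simp [Walk.support], by simp [Walk.support]⟩
    obtain ⟨w, hw, q, hqR, hq, hqB⟩ := ih hR.2 hv
    by_cases huq : u ∈ q.support
    · obtain ⟨_, rfl, r, hrR, hr, -⟩ := Walk.exists_suffix hqR ⟨u, huq, mem_singleton u⟩
      exact ⟨w, hw, r, hrR, hq.sublist hr.sublist, fun y hy ↦ hqB y (hr.subset hy)⟩
    · refine ⟨w, hw, .cons e h q, ⟨hR.1, hqR⟩, List.nodup_cons.2 ⟨huq, hq⟩, fun y hy hyB ↦ ?_⟩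
      rcases List.mem_cons.1 hy with rfl | hy
      · exact absurd hyB hu
      · exact hqB y hy hyB

/-- A path from `P` to the complement of `Q` with no inner vertex in either of the two sets. -/
structure CrossingPath (G : Multigraph) (P Q : Set G.V) where
  source : G.V
  target : G.V
  walk : G.Walk source target
  source_mem : source ∈ P
  target_notMem : target ∉ Q
  nodup : walk.support.Nodup
  eq_source : ∀ x ∈ walk.support, x ∈ P → x = source
  eq_target : ∀ x ∈ walk.support, x ∉ Q → x = target

variable {P Q : Set G.V}

theorem exists_crossingPath_or_cut (R : G.E → ℤ → Prop) (P Q : Set G.V) :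
    (∃ W : CrossingPath G P Q, W.walk.AllSteps R) ∨
    ∃ S, P ⊆ S ∧ S ⊆ Q ∧ ∀ e u v, G.IsLink e u v → u ∈ S → v ∉ S → ¬R e (G.dirSign e u) := by
  by_cases! hreach : ∃ u ∈ P, ∃ v ∉ Q, ∃ p : G.Walk u v, p.AllSteps R
  · obtain ⟨u, hu, v, hv, p, hp⟩ := hreach
    obtain ⟨w, hw, q, hqR, hq, hqQ⟩ := Walk.exists_path_until (B := Qᶜ) hp hv
    obtain ⟨x, hx, r, hrR, hr, hrP⟩ := Walk.exists_suffix hqR ⟨u, q.start_mem_support, hu⟩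
    exact .inl ⟨⟨x, w, r, hx, hw, hq.sublist hr.sublist, hrP, fun y hy ↦ hqQ y (hr.subset hy)⟩, hrR⟩
  · refine .inr ⟨{u | ∀ v ∉ Q, ∀ p : G.Walk u v, ¬p.AllSteps R}, fun u hu ↦ hreach u hu,
      fun u hu ↦ by_contra fun huQ ↦ hu u huQ (.nil u) trivial, fun e u v h hu hv hR ↦ ?_⟩
    simp only [mem_ofPred_eq, not_forall, not_not] at hv
    obtain ⟨w, hw, p, hp⟩ := hv
    exact hu w hw (.cons e h p) ⟨hR, hp⟩

theorem CrossingPath.netOut_flow (W : CrossingPath G P Q) {S : Set G.V} (hPS : P ⊆ S)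
    (hSQ : S ⊆ Q) : netOut W.walk.flow S = 1 := by
  have hsource : W.source ∈ S := hPS W.source_mem
  have htarget : W.target ∉ S := fun h ↦ W.target_notMem (hSQ h)
  simp [Multigraph.netOut_flow, hsource, htarget]

theorem exists_flow {t : ℕ} (hcut : ∀ S, P ⊆ S → S ⊆ Q → t ≤ G.delta S) {n : ℕ} (hn : n ≤ t) :
    ∃ f : G.E → ℤ, (∀ e, |f e| ≤ 1) ∧ ∀ S, P ⊆ S → S ⊆ Q → netOut f S = n := by
  induction n with
  | zero => exact ⟨0, by simp, by simp [netOut]⟩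
  | succ n ih =>
    obtain ⟨f, hf, hout⟩ := ih (by lia)
    rcases exists_crossingPath_or_cut (fun e s ↦ |f e + s| ≤ 1) P Q with ⟨W, hW⟩ | ⟨S, hPS, hSQ, hS⟩
    · refine ⟨f + W.walk.flow, fun e ↦ ?_, fun S hPS hSQ ↦ ?_⟩
      · by_cases he : e ∈ W.walk.edges
        · exact hW.flow (W.walk.edges_nodup W.nodup) he
        · simpa [W.walk.flow_eq_zero he] using hf e
      · rw [netOut_add, hout S hPS hSQ, W.netOut_flow hPS hSQ]
        push_cast; rfl
    · have hsat : netOut f S = G.delta S := netOut_eq_delta fun e u v huv hu hv ↦ by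
        have hres := hS e u v huv hu hv
        have hbound := abs_le.1 (hf e)
        rw [abs_le] at hres
        rcases G.dirSign_eq_or e u with hs | hs <;> rw [hs] at hres ⊢ <;> lia
      have := hcut S hPS hSQ
      rw [hout S hPS hSQ] at hsat
      lia

theorem exists_crossingPath_of_flow {n : ℕ} {f : G.E → ℤ} (hf : ∀ e, |f e| ≤ 1)
    (hout : ∀ S, P ⊆ S → S ⊆ Q → netOut f S = (n + 1 : ℕ)) :
    ∃ W : CrossingPath G P Q, ∀ e ∈ W.walk.edges, f e = W.walk.flow e := by
  rcases exists_crossingPath_or_cut (fun e s ↦ f e = s) P Q with ⟨W, hW⟩ | ⟨S, hPS, hSQ, hS⟩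
  · exact ⟨W, fun e he ↦ hW.flow (W.walk.edges_nodup W.nodup) he⟩
  · have hle : netOut f S ≤ 0 := netOut_nonpos fun e u v huv hu hv ↦ by
      have hres := hS e u v huv hu hv
      have hbound := abs_le.1 (hf e)
      rcases G.dirSign_eq_or e u with hs | hs <;> rw [hs] at hres ⊢ <;> lia
    rw [hout S hPS hSQ] at hle
    lia

theorem exists_paths_of_flow {n : ℕ} {f : G.E → ℤ} (hf : ∀ e, |f e| ≤ 1)
    (hout : ∀ S, P ⊆ S → S ⊆ Q → netOut f S = n) :
    ∃ W : Fin n → CrossingPath G P Q, (∀ i, ∀ e ∈ (W i).walk.edges, f e ≠ 0) ∧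
      Pairwise fun i j ↦ (W i).walk.edges.Disjoint (W j).walk.edges := by
  induction n generalizing f with
  | zero => exact ⟨Fin.elim0, fun i ↦ i.elim0, fun i ↦ i.elim0⟩
  | succ n ih =>
    obtain ⟨W, hfW⟩ := exists_crossingPath_of_flow hf hout
    set g : G.E → ℤ := f - W.walk.flow with hg
    have hgW {e : G.E} (he : e ∈ W.walk.edges) : g e = 0 := by simp [hg, hfW e he]
    have hgW' {e : G.E} (he : e ∉ W.walk.edges) : g e = f e := by
      simp [hg, W.walk.flow_eq_zero he]
    have hgout (S : Set G.V) (hPS : P ⊆ S) (hSQ : S ⊆ Q) : netOut g S = n := by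
      have := hout S hPS hSQ
      rw [← sub_add_cancel f W.walk.flow, netOut_add, W.netOut_flow hPS hSQ] at this
      push_cast at this
      lia
    obtain ⟨W', hW', hdisj⟩ := ih (f := g)
      (fun e ↦ by by_cases he : e ∈ W.walk.edges <;> simp [he, hgW, hgW', hf]) hgout
    have hnew (i : Fin n) {e : G.E} (he : e ∈ (W' i).walk.edges) : e ∉ W.walk.edges :=
      fun heW ↦ hW' i e he (hgW heW)
    refine ⟨Fin.cons W W', fun i ↦ ?_, fun i j hij ↦ ?_⟩
    · refine Fin.cases (fun e he ↦ ?_) (fun i e he ↦ ?_) i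
      · rw [hfW e he]
        exact W.walk.flow_ne_zero (W.walk.edges_nodup W.nodup) he
      · rw [← hgW' (hnew i he)]
        exact hW' i e he
    · cases i using Fin.cases <;> cases j using Fin.cases
      · exact absurd rfl hij
      · exact fun e he he' ↦ hnew _ he' he
      · exact fun e he he' ↦ hnew _ he he'
      · exact hdisj (by simpa using hij)

theorem exists_edgeDisjoint_crossingPaths {t : ℕ} (hcut : ∀ S, P ⊆ S → S ⊆ Q → t ≤ G.delta S) :
    ∃ W : Fin t → CrossingPath G P Q,
      Pairwise fun i j ↦ (W i).walk.edges.Disjoint (W j).walk.edges := by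
  obtain ⟨f, hf, hout⟩ := exists_flow hcut le_rfl
  obtain ⟨W, -, hW⟩ := exists_paths_of_flow hf hout
  exact ⟨W, hW⟩

end Flow

/-! ### Boundaried graphs and interfaces -/

variable {t : ℕ}

section Boundaried

variable {m : ℕ} {A B : Multigraph} {a : Fin t → A.V} {b : Fin t → B.V}

theorem ncard_eq_ncard_preimage_inl_add_ncard_preimage_inr {γ δ : Type*} [Finite γ] [Finite δ]
    (s : Set (γ ⊕ δ)) : s.ncard = (Sum.inl ⁻¹' s).ncard + (Sum.inr ⁻¹' s).ncard := by
  have hdisj : Disjoint (Sum.inl '' (Sum.inl ⁻¹' s)) (Sum.inr '' (Sum.inr ⁻¹' s)) :=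
    disjoint_image_inl_image_inr
  rw [← ncard_image_of_injective (Sum.inl ⁻¹' s) Sum.inl_injective,
    ← ncard_image_of_injective (Sum.inr ⁻¹' s) Sum.inr_injective, ← ncard_union_eq hdisj,
    image_preimage_inl_union_image_preimage_inr]

theorem ncard_symmDiff_le {γ : Type*} [Finite γ] (X Y Z : Set γ) :
    (symmDiff X Z).ncard ≤ (symmDiff X Y).ncard + (symmDiff Y Z).ncard :=
  (ncard_le_ncard (symmDiff_triangle X Y Z)).trans (ncard_union_le ..)

/-- The contribution of the boundaried graph `(A, a)` to a cut of a larger graph in which the `i`-th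
boundary edge leaves `A` at `a i`: the left side of the cut meets `A` in `S`, and `J` is the set of
boundary edges whose outer end is on the left side. -/
noncomputable def boundaryDelta (A : Multigraph) (a : Fin t → A.V) (S : Set A.V)
    (J : Set (Fin t)) : ℕ :=
  A.delta S + (symmDiff (a ⁻¹' S) J).ncard

theorem delta_join (S : Set (join A B a b).V) :
    (join A B a b).delta S =
      A.boundaryDelta a (Sum.inl ⁻¹' S) (b ⁻¹' (Sum.inr ⁻¹' S)) + B.delta (Sum.inr ⁻¹' S) := by
  have hboundary : Sum.inr ⁻¹' (join A B a b).cut S =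
      symmDiff (a ⁻¹' (Sum.inl ⁻¹' S)) (b ⁻¹' (Sum.inr ⁻¹' S)) := by
    ext i
    simp only [cut, join, mem_preimage, mem_ofPred_eq, Sum.elim_inr, mem_symmDiff]
    tauto
  have hedges : (Sum.inl ⁻¹' (join A B a b).cut S).ncard =
      A.delta (Sum.inl ⁻¹' S) + B.delta (Sum.inr ⁻¹' S) :=
    ncard_eq_ncard_preimage_inl_add_ncard_preimage_inr _
  have hcut := ncard_eq_ncard_preimage_inl_add_ncard_preimage_inr ((join A B a b).cut S)
  rw [boundaryDelta, ← hboundary, add_right_comm, ← hedges]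
  exact hcut

theorem delta_join' (S : Set (join A B a b).V) :
    (join A B a b).delta S =
      B.boundaryDelta b (Sum.inr ⁻¹' S) (a ⁻¹' (Sum.inl ⁻¹' S)) + A.delta (Sum.inl ⁻¹' S) := by
  rw [delta_join, boundaryDelta, boundaryDelta, symmDiff_comm]
  ring

/-- What one side of a join with `t` boundary edges has to know about the other side in order to
build an ordering of width at most `k` with `m` buckets, even ones for the vertices on side `false`
and odd ones for those on side `true`. -/
structure Interface (k m t : ℕ) where
  /-- The bucket of the end on a given side of the `i`-th boundary edge. -/
  bucket : Bool → Fin t → Fin m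
  /-- The number of edges, on the side that does not own the `j`-th bucket, that cross the cut
  before this bucket. -/
  load : Fin m → Fin (k + 1)

theorem Interface.injective_pair :
    Injective fun I : Interface k m t ↦ (I.bucket, I.load) :=
  fun ⟨_, _⟩ ⟨_, _⟩ h ↦ by simpa using h

instance : Finite (Interface k m t) := .of_injective _ Interface.injective_pair

theorem Interface.card_le (k m t : ℕ) :
    Nat.card (Interface k m t) ≤ (m ^ t) ^ 2 * (k + 1) ^ m := by
  refine (Nat.card_le_card_of_injective _ Interface.injective_pair).trans_eq ?_
  simp [Nat.card_eq_fintype_card]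

/-- The ordering `ρ` of `A` and its distribution `T` into the buckets of side `s` fit the
interface `I`. -/
structure RealizedBy (A : Multigraph) (a : Fin t → A.V) (s : Bool) (I : Interface k m t)
    (ρ : A.V → ℕ) (T : A.V → Fin m) : Prop where
  injective : Injective ρ
  mono : ∀ u v, ρ u ≤ ρ v → T u ≤ T v
  bodd : ∀ v, (T v : ℕ).bodd = s
  le_width : ∀ v, A.boundaryDelta a {u | ρ u ≤ ρ v} {i | I.bucket (!s) i < T v} + I.load (T v) ≤ k
  le_load : ∀ j : Fin m, (j : ℕ).bodd = !s →
    A.boundaryDelta a {u | T u < j} {i | I.bucket s i < j} ≤ I.load j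

/-- The boundaried graph `(A, a)` can take part in an ordering with interface `I` as side `s`. -/
def Admits (A : Multigraph) (a : Fin t → A.V) (s : Bool) (I : Interface k m t) : Prop :=
  ∃ ρ T, A.RealizedBy a s I ρ T

variable {s : Bool} {I : Interface k m t} {ρ : A.V → ℕ} {σ : B.V → ℕ} {T : A.V → Fin m}
  {U : B.V → Fin m}

theorem RealizedBy.boundaryDelta_add_delta_le (hA : A.RealizedBy a s I ρ T)
    (hB : B.RealizedBy b (!s) I σ U) (v : A.V) :
    A.boundaryDelta a {u | ρ u ≤ ρ v} (b ⁻¹' {w | U w < T v}) + B.delta {w | U w < T v} ≤ k := by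
  have hwidth := hA.le_width v
  have hload := hB.le_load (T v) (by simp [hA.bodd])
  have htri := ncard_symmDiff_le (a ⁻¹' {u | ρ u ≤ ρ v}) {i | I.bucket (!s) i < T v}
    (b ⁻¹' {w | U w < T v})
  rw [boundaryDelta, symmDiff_comm] at hload
  rw [boundaryDelta] at hwidth ⊢
  lia

theorem RealizedBy.setOf_toLex_le (hA : A.RealizedBy a s I ρ T) (v : A.V) :
    {u | toLex (T u, ρ u) ≤ toLex (T v, ρ v)} = {u | ρ u ≤ ρ v} := by
  ext u
  simp only [mem_ofPred_eq, Prod.Lex.toLex_le_toLex]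
  refine ⟨?_, fun h ↦ (hA.mono u v h).lt_or_eq.imp_right fun hT ↦ ⟨hT, h⟩⟩
  rintro (hT | ⟨-, h⟩)
  · exact le_of_not_ge fun h ↦ (hA.mono v u h).not_gt hT
  · exact h

theorem RealizedBy.ne (hA : A.RealizedBy a s I ρ T) (hB : B.RealizedBy b (!s) I σ U) (v : A.V)
    (w : B.V) : U w ≠ T v := fun h ↦ by
  have := hB.bodd w
  rw [h, hA.bodd v] at this
  simp at this

theorem RealizedBy.setOf_toLex_le_of_not (hA : A.RealizedBy a s I ρ T)
    (hB : B.RealizedBy b (!s) I σ U) (v : A.V) :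
    {w | toLex (U w, σ w) ≤ toLex (T v, ρ v)} = {w | U w < T v} := by
  ext w
  simp [Prod.Lex.toLex_le_toLex, hA.ne hB v w]

theorem Admits.cutwidth_join_le (hA : A.Admits a s I) (hB : B.Admits b (!s) I) :
    (join A B a b).cutwidth ≤ k := by
  obtain ⟨ρ, T, hA⟩ := hA
  obtain ⟨σ, U, hB⟩ := hB
  have hA' : A.RealizedBy a (!!s) I ρ T := by simpa using hA
  let τ : (join A B a b).V → Fin m ×ₗ ℕ :=
    Sum.elim (fun v ↦ toLex (T v, ρ v)) (fun w ↦ toLex (U w, σ w))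
  refine WidthLE.cutwidth_le (ρ := τ) ⟨?_, ?_⟩
  · refine Injective.sumElim (fun u v h ↦ hA.injective ?_) (fun u v h ↦ hB.injective ?_)
      fun v w h ↦ hA.ne hB v w ?_
    all_goals simp_all
  · rintro (v | w)
    · have := hA.boundaryDelta_add_delta_le hB v
      rw [← hA.setOf_toLex_le, ← hA.setOf_toLex_le_of_not hB] at this
      exact (delta_join _).trans_le this
    · have := hB.boundaryDelta_add_delta_le hA' w
      rw [← hB.setOf_toLex_le, ← hB.setOf_toLex_le_of_not hA'] at this
      exact (delta_join' _).trans_le this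

theorem delta_inl_add_delta_inr_le (S : Set (join A B a b).V) :
    A.delta (Sum.inl ⁻¹' S) + B.delta (Sum.inr ⁻¹' S) ≤ (join A B a b).delta S := by
  rw [delta_join, boundaryDelta]
  lia

theorem delta_range_inl_le : (join A B a b).delta (range Sum.inl : Set (A.V ⊕ B.V)) ≤ t := by
  have hinl : Sum.inl ⁻¹' (range Sum.inl : Set (A.V ⊕ B.V)) = univ := preimage_range _
  have hinr : Sum.inr ⁻¹' (range Sum.inl : Set (A.V ⊕ B.V)) = ∅ := preimage_inr_range_inl
  calc (join A B a b).delta (range Sum.inl : Set (A.V ⊕ B.V))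
      = A.boundaryDelta a univ (b ⁻¹' ∅) + B.delta ∅ := by rw [← hinl, ← hinr]; exact delta_join _
    _ ≤ t := by
      simpa [boundaryDelta, delta_empty, delta_univ]
        using ncard_le_card (symmDiff univ (∅ : Set (Fin t)))

theorem RealizedBy.of_le_iff (hρ : Injective ρ) (hT : ∀ u v, ρ u ≤ ρ v → T u ≤ T v)
    (hTs : ∀ v, (T v : ℕ).bodd = s) (hUs : ∀ w, (U w : ℕ).bodd = !s)
    (hle : ∀ v w, σ w ≤ ρ v → U w ≤ T v) (hge : ∀ v w, ρ v ≤ σ w → T v ≤ U w)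
    (hwidth : ∀ v,
      A.boundaryDelta a {u | ρ u ≤ ρ v} (b ⁻¹' {w | σ w ≤ ρ v}) + B.delta {w | σ w ≤ ρ v} ≤ k)
    (hbucket : ∀ i, I.bucket s i = T (a i)) (hbucket' : ∀ i, I.bucket (!s) i = U (b i))
    (hload : ∀ j : Fin m, (j : ℕ).bodd = !s → I.load j = A.delta {u | T u < j})
    (hload' : ∀ j : Fin m, (j : ℕ).bodd = s → I.load j = B.delta {w | U w < j}) :
    A.RealizedBy a s I ρ T where
  injective := hρ
  mono := hT
  bodd := hTs
  le_width v := by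
    have hset : {w | σ w ≤ ρ v} = {w | U w < T v} := by
      ext w
      have hne : U w ≠ T v := fun h ↦ by simpa [h, hTs] using hUs w
      exact ⟨fun h ↦ (hle v w h).lt_of_ne hne, fun h ↦ le_of_not_ge fun h' ↦ (hge v w h').not_gt h⟩
    have hv := hwidth v
    rw [hset] at hv
    simpa only [hload' _ (hTs v), hbucket', preimage_ofPred_eq] using hv
  le_load j hj := by simp [boundaryDelta, hload j hj, hbucket]

theorem exists_admits_of_cutwidth_join_le (h : (join A B a b).cutwidth ≤ k) :
    ∃ I : Interface k (numBuckets k t) t, A.Admits a false I ∧ B.Admits b true I := by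
  obtain ⟨ρ, T, hT⟩ := exists_isBucketedBy_numBuckets h delta_range_inl_le
  let U (x : A.V ⊕ B.V) : Fin (numBuckets k t) := ⟨T x, hT.lt x⟩
  have hmono (x y : A.V ⊕ B.V) : ρ x ≤ ρ y → U x ≤ U y := hT.mono x y
  have hinl (v : A.V) : (U (Sum.inl v) : ℕ).bodd = false := by
    have := (hT.even_iff (Sum.inl v)).2 (mem_range_self v)
    simpa [Nat.mod_two_of_bodd] using this
  have hinr (w : B.V) : (U (Sum.inr w) : ℕ).bodd = true := by
    have := (hT.even_iff (Sum.inr w)).not.2 fun ⟨_, h⟩ ↦ Sum.inl_ne_inr h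
    simpa [Nat.mod_two_of_bodd] using this
  have hload (j : Fin (numBuckets k t)) :
      A.delta {v | U (Sum.inl v) < j} + B.delta {w | U (Sum.inr w) < j} ≤ k :=
    (delta_inl_add_delta_inr_le {x | U x < j}).trans <|
      hT.width.delta_le fun u v huv hv ↦ (hmono u v huv).trans_lt hv
  let I : Interface k (numBuckets k t) t :=
    { bucket := fun s i ↦ bif s then U (Sum.inr (b i)) else U (Sum.inl (a i))
      load := fun j ↦ bif (j : ℕ).bodd
        then ⟨A.delta {v | U (Sum.inl v) < j}, by have := hload j; lia⟩
        else ⟨B.delta {w | U (Sum.inr w) < j}, by have := hload j; lia⟩ }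
  have hA : A.RealizedBy a false I (ρ ∘ Sum.inl) (U ∘ Sum.inl) :=
    .of_le_iff (σ := ρ ∘ Sum.inr) (U := U ∘ Sum.inr) (hT.width.1.comp Sum.inl_injective)
      (fun _ _ ↦ hmono _ _) hinl hinr (fun _ _ ↦ hmono _ _) (fun _ _ ↦ hmono _ _)
      (fun v ↦ (delta_join {x | ρ x ≤ ρ (Sum.inl v)}).symm.trans_le (hT.width.2 (Sum.inl v)))
      (fun _ ↦ rfl) (fun _ ↦ rfl) (fun j hj ↦ by simp [I, hj]) (fun j hj ↦ by simp [I, hj])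
  have hB : B.RealizedBy b true I (ρ ∘ Sum.inr) (U ∘ Sum.inr) :=
    .of_le_iff (σ := ρ ∘ Sum.inl) (U := U ∘ Sum.inl) (hT.width.1.comp Sum.inr_injective)
      (fun _ _ ↦ hmono _ _) hinr hinl (fun _ _ ↦ hmono _ _) (fun _ _ ↦ hmono _ _)
      (fun w ↦ (delta_join' {x | ρ x ≤ ρ (Sum.inr w)}).symm.trans_le (hT.width.2 (Sum.inr w)))
      (fun _ ↦ rfl) (fun _ ↦ rfl) (fun j hj ↦ by simp [I, hj]) (fun j hj ↦ by simp [I, hj])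
  exact ⟨I, ⟨_, _, hA⟩, ⟨_, _, hB⟩⟩

/-- Every cut of `B` restricts to a cut of the boundaried graph `(A, a)` that is no larger, when the
outer ends of the boundary edges are placed at the vertices `b i` of `B`. -/
def CutDominated (A : Multigraph) (a : Fin t → A.V) (B : Multigraph) (b : Fin t → B.V) : Prop :=
  ∃ ι : A.V → B.V, Injective ι ∧ ∀ S, A.boundaryDelta a (ι ⁻¹' S) (b ⁻¹' S) ≤ B.delta S

theorem boundaryDelta_triangle (A : Multigraph) (a : Fin t → A.V) (S : Set A.V)
    (J K : Set (Fin t)) : A.boundaryDelta a S K ≤ A.boundaryDelta a S J + (symmDiff J K).ncard := by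
  rw [boundaryDelta, boundaryDelta, add_assoc]
  gcongr
  exact ncard_symmDiff_le ..

theorem Admits.of_cutDominated (hB : B.Admits b s I) (h : CutDominated A a B b) :
    A.Admits a s I := by
  obtain ⟨ι, hι, hle⟩ := h
  obtain ⟨ρ, T, hB⟩ := hB
  have hJ (S J) : A.boundaryDelta a (ι ⁻¹' S) J ≤ B.boundaryDelta b S J :=
    (A.boundaryDelta_triangle a _ (b ⁻¹' S) J).trans (Nat.add_le_add_right (hle S) _)
  exact ⟨ρ ∘ ι, T ∘ ι, hB.injective.comp hι, fun _ _ ↦ hB.mono _ _, fun _ ↦ hB.bodd _,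
    fun v ↦ (Nat.add_le_add_right (hJ {w | ρ w ≤ ρ (ι v)} _) _).trans (hB.le_width (ι v)),
    fun j hj ↦ (hJ {w | T w < j} _).trans (hB.le_load j hj)⟩

end Boundaried

theorem cutwidth_le_of_injective {H : Multigraph} (f : G.V → H.V) (hf : Injective f)
    (hle : ∀ S, G.delta (f ⁻¹' S) ≤ H.delta S) (hH : H.cutwidth ≤ k) : G.cutwidth ≤ k := by
  obtain ⟨ρ, hρ, hwidth⟩ := cutwidth_le_iff.1 hH
  exact WidthLE.cutwidth_le (ρ := ρ ∘ f) ⟨hρ.comp hf, fun v ↦ (hle _).trans (hwidth (f v))⟩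

/-! ### The two sides of a cut -/

section Sides

variable {P : Set G.V}

/-- The set of edges with both ends in `P`. -/
def edgesIn (P : Set G.V) : Set G.E := {e | (G.ends e).1 ∈ P ∧ (G.ends e).2 ∈ P}

theorem IsLink.mem_edgesIn_iff {e : G.E} {u v : G.V} (h : G.IsLink e u v) :
    e ∈ edgesIn P ↔ u ∈ P ∧ v ∈ P := by
  rcases h with h | h <;> simp [edgesIn, h, and_comm]

/-- The inclusion of the vertices of an induced subgraph. -/
def incl (P : Set G.V) : (G.induce P).V → G.V := Subtype.val

theorem incl_injective (P : Set G.V) : Injective (incl P) := Subtype.val_injective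

theorem incl_mem (v : (G.induce P).V) : incl P v ∈ P := v.2

theorem delta_induce (S : Set G.V) :
    (G.induce P).delta (incl P ⁻¹' S) = (G.cut S ∩ edgesIn P).ncard := by
  have himage : (Subtype.val '' (Subtype.val ⁻¹' G.cut S : Set {e // e ∈ edgesIn P})) =
      G.cut S ∩ edgesIn P := by
    rw [Subtype.image_preimage_coe, inter_comm]
  rw [← himage, ncard_image_of_injective _ Subtype.val_injective]
  rfl

/-- The end in `P` of an edge that crosses the boundary of `P`. -/
noncomputable def innerEnd (e : G.cut P) : (G.induce P).V :=
  ⟨(mem_cut_iff_exists.1 e.2).choose, (mem_cut_iff_exists.1 e.2).choose_spec.choose_spec.2.1⟩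

/-- The end outside `P` of an edge that crosses the boundary of `P`. -/
noncomputable def outerEnd (e : G.cut P) : (G.induce Pᶜ).V :=
  ⟨(mem_cut_iff_exists.1 e.2).choose_spec.choose,
    (mem_cut_iff_exists.1 e.2).choose_spec.choose_spec.2.2⟩

theorem isLink_ends_of_cut (e : G.cut P) :
    G.IsLink e (incl P (innerEnd e)) (incl Pᶜ (outerEnd e)) :=
  (mem_cut_iff_exists.1 e.2).choose_spec.choose_spec.1

theorem IsLink.incl_ends {e : G.cut P} {u v : G.V} (h : G.IsLink e u v) (hu : u ∈ P)
    (hv : v ∉ P) : incl P (innerEnd e) = u ∧ incl Pᶜ (outerEnd e) = v := by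
  have hi := incl_mem (innerEnd e)
  have ho : incl Pᶜ (outerEnd e) ∉ P := incl_mem (outerEnd e)
  rcases h with h | h <;> rcases isLink_ends_of_cut e with h' | h' <;> grind

theorem cut_inter_cut_subset_image (x : Fin t ≃ G.cut P) (S : Set G.V) :
    G.cut S ∩ G.cut P ⊆ (fun i ↦ (x i : G.E)) ''
      symmDiff (innerEnd ∘ x ⁻¹' (incl P ⁻¹' S)) (outerEnd ∘ x ⁻¹' (incl Pᶜ ⁻¹' S)) := by
  rintro e ⟨heS, heP⟩
  refine ⟨x.symm ⟨e, heP⟩, ?_, by simp⟩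
  have := (isLink_ends_of_cut ⟨e, heP⟩).mem_cut_iff.1 heS
  simp only [mem_symmDiff, mem_preimage, comp_apply, Equiv.apply_symm_apply]
  tauto

theorem delta_le_of_cut (x : Fin t ≃ G.cut P) (S : Set G.V) :
    G.delta S ≤ (G.induce P).boundaryDelta (innerEnd ∘ x) (incl P ⁻¹' S)
      (outerEnd ∘ x ⁻¹' (incl Pᶜ ⁻¹' S)) + (G.induce Pᶜ).delta (incl Pᶜ ⁻¹' S) := by
  have hcover : G.cut S ⊆
      G.cut S ∩ edgesIn P ∪ G.cut S ∩ G.cut P ∪ G.cut S ∩ edgesIn Pᶜ := by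
    intro e
    simp only [edgesIn, cut, mem_union, mem_inter_iff, mem_ofPred_eq, mem_compl_iff]
    tauto
  have hcross := (ncard_le_ncard (cut_inter_cut_subset_image x S)).trans ncard_image_le
  rw [← ncard_cut, boundaryDelta, delta_induce, delta_induce]
  refine (ncard_le_ncard hcover).trans <| (ncard_union_le ..).trans ?_
  grw [ncard_union_le, hcross]

theorem cutwidth_le_of_join (x : Fin t ≃ G.cut P)
    (h : (join (G.induce P) (G.induce Pᶜ) (innerEnd ∘ x) (outerEnd ∘ x)).cutwidth ≤ k) :
    G.cutwidth ≤ k := by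
  classical
  let f : G.V ≃ P ⊕ (Pᶜ : Set G.V) := (Equiv.Set.sumCompl P).symm
  refine cutwidth_le_of_injective f f.injective (fun S ↦ ?_) h
  have hinl : Sum.inl ⁻¹' S = incl P ⁻¹' (f ⁻¹' S) :=
    congrArg (· ⁻¹' S) (funext fun v ↦ (Equiv.Set.sumCompl_symm_apply v).symm)
  have hinr : Sum.inr ⁻¹' S = incl Pᶜ ⁻¹' (f ⁻¹' S) :=
    congrArg (· ⁻¹' S) (funext fun v ↦ (Equiv.Set.sumCompl_symm_apply_compl v).symm)
  refine le_trans ?_ (delta_join S).ge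
  rw [hinl, hinr]
  exact delta_le_of_cut x _

end Sides

/-! ### Linkages and strong immersions -/

section Linkage

variable {P Q : Set G.V}

theorem Walk.exists_mem_cut {u v : G.V} (p : G.Walk u v) {S : Set G.V} (hu : u ∈ S) (hv : v ∉ S) :
    ∃ e ∈ p.edges, e ∈ G.cut S := by
  induction p with
  | nil => exact absurd hu hv
  | @cons u w v e h p ih =>
    by_cases hw : w ∈ S
    · obtain ⟨f, hf, hfS⟩ := ih hw hv
      exact ⟨f, List.mem_cons_of_mem _ hf, hfS⟩
    · exact ⟨e, List.mem_cons_self, (IsLink.mem_cut_iff h).2 (by tauto)⟩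

theorem CrossingPath.incl_innerEnd (W : CrossingPath G P Q) {e : G.cut P}
    (he : e.1 ∈ W.walk.edges) : incl P (innerEnd e) = W.source :=
  W.eq_source _ (W.walk.ends_mem_support he (isLink_ends_of_cut e)) (incl_mem _)

theorem CrossingPath.incl_outerEnd (W : CrossingPath G P Q) {e : G.cut Q}
    (he : e.1 ∈ W.walk.edges) : incl Qᶜ (outerEnd e) = W.target :=
  W.eq_target _ (W.walk.ends_mem_support he (isLink_ends_of_cut e).symm) (incl_mem (outerEnd e))

theorem CrossingPath.notMem_edgesIn_source (W : CrossingPath G P Q) {e : G.E}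
    (he : e ∈ W.walk.edges) : e ∉ edgesIn P := fun ⟨h₁, h₂⟩ ↦
  G.loopless e <|
    (W.eq_source _ (W.walk.ends_mem_support he (isLink_ends e)) h₁).trans
      (W.eq_source _ (W.walk.ends_mem_support he (isLink_ends e).symm) h₂).symm

theorem CrossingPath.notMem_edgesIn_target (W : CrossingPath G P Q) {e : G.E}
    (he : e ∈ W.walk.edges) : e ∉ edgesIn Qᶜ := fun ⟨h₁, h₂⟩ ↦
  G.loopless e <|
    (W.eq_target _ (W.walk.ends_mem_support he (isLink_ends e)) h₁).trans
      (W.eq_target _ (W.walk.ends_mem_support he (isLink_ends e).symm) h₂).symm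

theorem CrossingPath.exists_mem_cut_source (W : CrossingPath G P Q) (hPQ : P ⊆ Q) :
    ∃ e ∈ W.walk.edges, e ∈ G.cut P :=
  W.walk.exists_mem_cut W.source_mem fun h ↦ W.target_notMem (hPQ h)

theorem CrossingPath.exists_mem_cut_target (W : CrossingPath G P Q) (hPQ : P ⊆ Q) :
    ∃ e ∈ W.walk.edges, e ∈ G.cut Q :=
  W.walk.exists_mem_cut (hPQ W.source_mem) W.target_notMem

theorem exists_equiv_cut {R : Set G.V} (hR : G.delta R = t) {W : Fin t → CrossingPath G P Q}
    (hdisj : Pairwise fun i j ↦ (W i).walk.edges.Disjoint (W j).walk.edges)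
    (hW : ∀ i, ∃ e ∈ (W i).walk.edges, e ∈ G.cut R) :
    ∃ x : Fin t ≃ G.cut R, ∀ i, (x i).1 ∈ (W i).walk.edges := by
  choose f hf hfR using hW
  have hinj : Injective fun i ↦ (⟨f i, hfR i⟩ : G.cut R) := fun i j hij ↦ by
    by_contra hne
    exact hdisj hne (hf i) (Subtype.mk.inj hij ▸ hf j)
  refine ⟨.ofBijective _ (hinj.bijective_of_nat_card_le ?_), hf⟩
  rw [Nat.card_fin, Nat.card_coe_set_eq, ncard_cut, hR]

/-- A family of edge-disjoint paths which crosses from `P` to the complement of `Q`, the `i`-th path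
using the boundary edges `x i` of `P` and `y i` of `Q`. -/
structure Linkage (x : Fin t ≃ G.cut P) (y : Fin t ≃ G.cut Q) where
  path : Fin t → CrossingPath G P Q
  disjoint : Pairwise fun i j ↦ (path i).walk.edges.Disjoint (path j).walk.edges
  first_mem : ∀ i, (x i).1 ∈ (path i).walk.edges
  last_mem : ∀ i, (y i).1 ∈ (path i).walk.edges

theorem exists_linkage (hPQ : P ⊆ Q) (hP : G.delta P = t) (hQ : G.delta Q = t)
    (hcut : ∀ S, P ⊆ S → S ⊆ Q → t ≤ G.delta S) (x : Fin t ≃ G.cut P) :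
    ∃ y : Fin t ≃ G.cut Q, Nonempty (Linkage x y) := by
  obtain ⟨W, hW⟩ := exists_edgeDisjoint_crossingPaths hcut
  obtain ⟨z, hz⟩ := exists_equiv_cut hP hW fun i ↦ (W i).exists_mem_cut_source hPQ
  let π : Equiv.Perm (Fin t) := x.trans z.symm
  have hdisj : Pairwise fun i j ↦ (W (π i)).walk.edges.Disjoint (W (π j)).walk.edges :=
    hW.comp_of_injective π.injective
  obtain ⟨y, hy⟩ := exists_equiv_cut hQ hdisj fun i ↦ (W (π i)).exists_mem_cut_target hPQ
  exact ⟨y, ⟨fun i ↦ W (π i), hdisj, fun i ↦ by simpa [π] using hz (π i), hy⟩⟩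

variable {x : Fin t ≃ G.cut P} {y : Fin t ≃ G.cut Q}

theorem Linkage.eq_last (L : Linkage x y) {i : Fin t} {e : G.cut Q}
    (he : e.1 ∈ (L.path i).walk.edges) : e = y i := by
  obtain ⟨j, rfl⟩ := y.surjective e
  by_contra hne
  exact L.disjoint (fun h ↦ hne (by rw [h])) he (L.last_mem j)

theorem Linkage.exists_separated (L : Linkage x y) (hPQ : P ⊆ Q) {S : Set G.V} {i : Fin t}
    (hx : incl P (innerEnd (x i)) ∈ S) (hy : incl Q (innerEnd (y i)) ∉ S) :
    ∃ e ∈ (L.path i).walk.edges, e ∈ G.cut S ∩ edgesIn Q := by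
  rw [(L.path i).incl_innerEnd (L.first_mem i)] at hx
  obtain ⟨e, he, heS⟩ := (L.path i).walk.exists_mem_cut (S := S ∩ Q)
    ⟨hx, hPQ (L.path i).source_mem⟩ fun h ↦ (L.path i).target_notMem h.2
  refine ⟨e, he, ?_⟩
  obtain ⟨u, v, huv, hu, hv⟩ := mem_cut_iff_exists.1 heS
  have hvQ : v ∈ Q := by
    by_contra hvQ
    have heQ : e ∈ G.cut Q := mem_cut_iff_exists.2 ⟨u, v, huv, hu.2, hvQ⟩
    rw [← L.eq_last (e := ⟨e, heQ⟩) he, (IsLink.incl_ends (e := ⟨e, heQ⟩) huv hu.2 hvQ).1] at hy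
    exact hy hu.1
  have hvS : v ∉ S := fun h ↦ hv ⟨h, hvQ⟩
  exact ⟨mem_cut_iff_exists.2 ⟨u, v, huv, hu.1, hvS⟩, huv.mem_edgesIn_iff.2 ⟨hu.2, hvQ⟩⟩

theorem cut_compl (S : Set G.V) : G.cut Sᶜ = G.cut S := by
  ext e
  simp only [cut, mem_ofPred_eq, mem_compl_iff]
  tauto

theorem Linkage.cutDominated (L : Linkage x y) (hPQ : P ⊆ Q) :
    CutDominated (G.induce P) (innerEnd ∘ x) (G.induce Q) (innerEnd ∘ y) := by
  refine ⟨inclusion hPQ, inclusion_injective hPQ, fun S ↦ ?_⟩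
  obtain ⟨S, rfl⟩ : ∃ S' : Set G.V, S = incl Q ⁻¹' S' :=
    ⟨incl Q '' S, (preimage_image_eq _ (incl_injective Q)).symm⟩
  set D := symmDiff (innerEnd ∘ x ⁻¹' (incl P ⁻¹' S)) (innerEnd ∘ y ⁻¹' (incl Q ⁻¹' S))
  have hsep (i : D) : ∃ e ∈ (L.path i).walk.edges, e ∈ G.cut S ∩ edgesIn Q := by
    rcases i.2 with ⟨hx, hy⟩ | ⟨hy, hx⟩
    · exact L.exists_separated hPQ hx hy
    · simpa only [cut_compl] using L.exists_separated (S := Sᶜ) hPQ hx (not_not.2 hy)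
  choose f hf hfS using hsep
  have hinj : Injective f := fun i j hij ↦ by
    by_contra hne
    exact L.disjoint (Subtype.coe_injective.ne hne) (hf i) (hij ▸ hf j)
  have hdisj : Disjoint (G.cut S ∩ edgesIn P) (range f) := by
    rw [disjoint_right]
    rintro _ ⟨i, rfl⟩ h
    exact (L.path i).notMem_edgesIn_source (hf i) h.2
  have hsub : G.cut S ∩ edgesIn P ∪ range f ⊆ G.cut S ∩ edgesIn Q :=
    union_subset (fun e h ↦ ⟨h.1, hPQ h.2.1, hPQ h.2.2⟩) (range_subset_iff.2 hfS)
  change (G.induce P).delta (incl P ⁻¹' S) + D.ncard ≤ _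
  rw [delta_induce, delta_induce, ← Nat.card_coe_set_eq D, ← ncard_range_of_injective hinj,
    ← ncard_union_eq hdisj]
  exact ncard_le_ncard hsub

theorem StrongImmersion.of_disjoint_edgeSets {H : Multigraph} (φ : H.V → G.V) (hφ : Injective φ)
    (F : H.E → Set G.E)
    (hF : ∀ e e' f, f ∈ F e → f ∈ F e' → e = e')
    (hpath : ∀ e, ∃ p : G.Walk (φ (H.ends e).1) (φ (H.ends e).2), p.support.Nodup ∧
      (∀ f ∈ p.edges, f ∈ F e) ∧
      ∀ v ∈ p.support, v ∈ range φ → v = φ (H.ends e).1 ∨ v = φ (H.ends e).2) :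
    StrongImmersion H G := by
  choose p hp hpF hends using hpath
  exact ⟨⟨⟨φ, hφ, p, hp, fun e e' he f hf hf' ↦
    he (hF e e' f (hpF e f hf) (hpF e' f hf'))⟩, fun e v hv h₁ h₂ hφv ↦
    (hends e v hv hφv).elim h₁ h₂⟩⟩

theorem IsLink.exists_walk {e : G.E} {u v : G.V} (h : G.IsLink e u v) :
    ∃ p : G.Walk u v, p.support.Nodup ∧ (∀ f ∈ p.edges, f = e) ∧
      ∀ w ∈ p.support, w = u ∨ w = v := by
  have huv : u ≠ v := by
    rintro rfl
    rcases h with h | h <;> exact G.loopless e (by rw [h])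
  exact ⟨.cons e h (.nil v), by simp [Walk.support, huv], by simp [Walk.edges],
    by simp [Walk.support]⟩

theorem strongImmersion_deleteEdges (F : Set G.E) : StrongImmersion (G.deleteEdges F) G := by
  refine .of_disjoint_edgeSets (H := G.deleteEdges F) (fun v ↦ v) injective_id (fun e ↦ {e.1})
    (fun _ _ _ h h' ↦ Subtype.ext (h.symm.trans h')) fun e ↦ ?_
  obtain ⟨p, hp, hpe, hends⟩ := (isLink_ends e.1).exists_walk
  exact ⟨p, hp, hpe, fun v hv _ ↦ hends v hv⟩

theorem Linkage.exists_walk (L : Linkage x y) (i : Fin t) :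
    ∃ p : G.Walk (incl P (innerEnd (x i))) (incl Qᶜ (outerEnd (y i))), p.support.Nodup ∧
      (∀ e ∈ p.edges, e ∈ (L.path i).walk.edges) ∧ ∀ v ∈ p.support, v ∈ P ∪ Qᶜ →
        v = incl P (innerEnd (x i)) ∨ v = incl Qᶜ (outerEnd (y i)) := by
  rw [(L.path i).incl_innerEnd (L.first_mem i), (L.path i).incl_outerEnd (L.last_mem i)]
  exact ⟨(L.path i).walk, (L.path i).nodup, fun _ ↦ id, fun v hv ↦
    Or.imp ((L.path i).eq_source v hv) ((L.path i).eq_target v hv)⟩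

/-- The edges of `G` that represent an edge of the graph obtained by replacing the part of `G`
between `P` and `Q` by the boundary edges of a linkage. -/
def Linkage.edgeSet (L : Linkage x y) :
    (join (G.induce P) (G.induce Qᶜ) (innerEnd ∘ x) (outerEnd ∘ y)).E → Set G.E :=
  Sum.elim (Sum.elim (fun e ↦ {e.1}) fun e ↦ {e.1}) fun i ↦ {e | e ∈ (L.path i).walk.edges}

theorem Linkage.eq_of_mem_edgeSet (L : Linkage x y) (hPQ : P ⊆ Q) (a b) (e : G.E)
    (ha : e ∈ L.edgeSet a) (hb : e ∈ L.edgeSet b) : a = b := by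
  have hsides (hP : e ∈ edgesIn P) (hQ : e ∈ edgesIn Qᶜ) : False := hQ.1 (hPQ hP.1)
  have hP (i) := (L.path i).notMem_edgesIn_source (e := e)
  have hQ (i) := (L.path i).notMem_edgesIn_target (e := e)
  match a, b with
  | .inl (.inl f), .inl (.inl g) => exact congrArg _ (congrArg _ (Subtype.ext (ha.symm.trans hb)))
  | .inl (.inr f), .inl (.inr g) => exact congrArg _ (congrArg _ (Subtype.ext (ha.symm.trans hb)))
  | .inr i, .inr j => exact congrArg _ (by_contra fun hij ↦ L.disjoint hij ha hb)
  | .inl (.inl f), .inl (.inr g) => exact (hsides (ha ▸ f.2) (hb ▸ g.2)).elim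
  | .inl (.inr f), .inl (.inl g) => exact (hsides (hb ▸ g.2) (ha ▸ f.2)).elim
  | .inl (.inl f), .inr i => exact (hP i hb (ha ▸ f.2)).elim
  | .inr i, .inl (.inl f) => exact (hP i ha (hb ▸ f.2)).elim
  | .inl (.inr f), .inr i => exact (hQ i hb (ha ▸ f.2)).elim
  | .inr i, .inl (.inr f) => exact (hQ i ha (hb ▸ f.2)).elim

theorem Linkage.strongImmersion (L : Linkage x y) (hPQ : P ⊆ Q) :
    StrongImmersion
      (join (G.induce P) (G.induce Qᶜ) (innerEnd ∘ x) (outerEnd ∘ y)) G := by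
  refine StrongImmersion.of_disjoint_edgeSets (Sum.elim (incl P) (incl Qᶜ)) ?_ L.edgeSet
    (L.eq_of_mem_edgeSet hPQ) ?_
  · refine (incl_injective P).sumElim (incl_injective Qᶜ) fun u v huv ↦ ?_
    exact incl_mem v (hPQ (huv ▸ incl_mem u))
  · have hrange {v : G.V} : v ∈ range (Sum.elim (incl P) (incl Qᶜ)) → v ∈ P ∪ Qᶜ := by
      rintro ⟨u | u, rfl⟩
      exacts [.inl (incl_mem u), .inr (incl_mem u)]
    rintro ((e | e) | i)
    · obtain ⟨p, hp, hpe, hends⟩ := (isLink_ends e.1).exists_walk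
      exact ⟨p, hp, hpe, fun v hv _ ↦ hends v hv⟩
    · obtain ⟨p, hp, hpe, hends⟩ := (isLink_ends e.1).exists_walk
      exact ⟨p, hp, hpe, fun v hv _ ↦ hends v hv⟩
    · obtain ⟨p, hp, hpe, hends⟩ := L.exists_walk i
      exact ⟨p, hp, hpe, fun v hv hφ ↦ hends v hv (hrange hφ)⟩

end Linkage

/-! ### Chains of cuts of equal size -/

theorem exists_strictMono_eq_of_mem_Ico {L r c a : ℕ} {f : ℕ → ℕ}
    (hf : ∀ i ∈ Ico a (a + L ^ r), f i ∈ Ico c (c + r)) :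
    ∃ t ∈ Ico c (c + r), ∃ s : Fin L → ℕ, StrictMono s ∧
      (∀ w, s w ∈ Ico a (a + L ^ r) ∧ f (s w) = t) ∧ ∀ u v, ∀ i ∈ Icc (s u) (s v), t ≤ f i := by
  induction r generalizing c a with
  | zero =>
    obtain ⟨h₁, h₂⟩ := hf a ⟨le_rfl, by simp⟩
    lia
  | succ r ih =>
    -- Cut the interval into `L` blocks: either each of them contains the minimal possible value
    -- `c`, or one of them avoids it and we recurse there.
    have hblock (w : Fin L) : (w + 1) * L ^ r ≤ L ^ (r + 1) := by
      rw [pow_succ']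
      exact Nat.mul_le_mul_right _ w.2
    by_cases hc : ∀ w : Fin L, ∃ i ∈ Ico (a + w * L ^ r) (a + (w + 1) * L ^ r), f i = c
    · choose s hs hsc using hc
      have hmem (w : Fin L) : s w ∈ Ico a (a + L ^ (r + 1)) :=
        ⟨(Nat.le_add_right ..).trans (hs w).1, (hs w).2.trans_le (by grw [hblock w])⟩
      refine ⟨c, by simp, s, fun v w hvw ↦ (hs v).2.trans_le (le_trans ?_ (hs w).1),
        fun w ↦ ⟨hmem w, hsc w⟩, fun u v i hi ↦
        (hf i ⟨(hmem u).1.trans hi.1, hi.2.trans_lt (hmem v).2⟩).1⟩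
      gcongr
      exact hvw
    · push Not at hc
      obtain ⟨w, hw⟩ := hc
      have hsub : Ico (a + w * L ^ r) (a + w * L ^ r + L ^ r) ⊆ Ico a (a + L ^ (r + 1)) :=
        Ico_subset_Ico (Nat.le_add_right ..) (by grw [← hblock w]; lia)
      obtain ⟨t, ht, s, hs, hst, hle⟩ := ih (c := c + 1) (a := a + w * L ^ r) fun i hi ↦ by
        obtain ⟨h₁, h₂⟩ := hf i (hsub hi)
        have := hw i (by rwa [add_one_mul, ← add_assoc])
        exact ⟨by lia, by lia⟩
      exact ⟨t, ⟨by grind, by grind⟩, s, hs, fun v ↦ ⟨hsub (hst v).1, (hst v).2⟩, hle⟩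

theorem exists_chain_of_cutwidth_le {w L : ℕ} (hw : G.cutwidth ≤ w)
    (hL : L ^ (w + 1) ≤ Nat.card G.V) :
    ∃ t ≤ w, ∃ P : Fin L → Set G.V, StrictMono P ∧ (∀ i, G.delta (P i) = t) ∧
      ∀ i j S, P i ⊆ S → S ⊆ P j → t ≤ G.delta S := by
  obtain ⟨ρ₀, hρ₀⟩ := cutwidth_le_iff.1 hw
  obtain ⟨ρ, hρ, hlinked⟩ := hρ₀.exists_cutLinked
  obtain ⟨e, he⟩ := exists_equiv_fin hρ.1
  let prefixLE (i : ℕ) : Set G.V := {u | (e u : ℕ) ≤ i}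
  have hinit (i : ℕ) : IsInitial ρ (prefixLE i) := fun u v huv hv ↦
    (Fin.le_iff_val_le_val.1 ((he u v).2 huv)).trans hv
  have hsubset {i j : ℕ} (hi : i < Nat.card G.V) (h : prefixLE i ⊆ prefixLE j) : i ≤ j := by
    simpa [prefixLE] using @h (e.symm ⟨i, hi⟩) (by simp [prefixLE])
  obtain ⟨t, ht, s, hs, hst, hle⟩ := exists_strictMono_eq_of_mem_Ico (L := L) (r := w + 1) (c := 0)
    (a := 0) (f := fun i ↦ G.delta (prefixLE i))
    fun i _ ↦ ⟨Nat.zero_le _, by have := hρ.delta_le (hinit i); lia⟩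
  have hlt (i : Fin L) : s i < Nat.card G.V := by have := (hst i).1.2; lia
  have hmono : StrictMono fun i ↦ prefixLE (s i) := fun i j hij ↦
    ⟨fun u hu ↦ le_trans hu (hs hij).le, fun h ↦ (hs hij).not_ge (hsubset (hlt j) h)⟩
  refine ⟨t, by grind, fun i ↦ prefixLE (s i), hmono, fun i ↦ (hst i).2, fun i j S hiS hSj ↦
    hlinked _ _ t (hinit _) (hinit _) (fun R hR hiR hRj ↦ ?_) S hiS hSj⟩
  obtain rfl | ⟨v, -, rfl⟩ := hR.eq_empty_or_eq_le
  · exact (hiR (show e.symm ⟨s i, hlt i⟩ ∈ prefixLE (s i) by simp [prefixLE])).elim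
  · have hv : {u | ρ u ≤ ρ v} = prefixLE (e v) := by
      ext u
      exact (he u v).symm
    rw [hv] at hiR hRj ⊢
    exact hle i j _ ⟨hsubset (hlt i) hiR, hsubset (e v).2 hRj⟩

theorem Isomorphic.card_V_eq {H : Multigraph} (h : H.Isomorphic G) :
    Nat.card H.V = Nat.card G.V :=
  h.elim fun φ ↦ Nat.card_congr φ.fv

theorem Isomorphic.card_E_eq {H : Multigraph} (h : H.Isomorphic G) :
    Nat.card H.E = Nat.card G.E :=
  h.elim fun φ ↦ Nat.card_congr φ.fe

theorem card_V_join_lt {P Q : Set G.V} (hPQ : P ⊂ Q) {a : Fin t → (G.induce P).V}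
    {b : Fin t → (G.induce Qᶜ).V} :
    Nat.card (join (G.induce P) (G.induce Qᶜ) a b).V < Nat.card G.V := by
  calc Nat.card (P ⊕ (Qᶜ : Set G.V)) = P.ncard + Qᶜ.ncard := Nat.card_sum
    _ < Q.ncard + Qᶜ.ncard := by grw [ncard_lt_ncard hPQ]
    _ = Nat.card G.V := ncard_add_ncard_compl Q

/-- Along the chain the interfaces admitted by the left part can only disappear. If `P` and `Q` are
consecutive members, then gluing the left part of `P` to the right part of `Q` yields a smaller
graph; an interface of an ordering of it is admitted by the left part of `P`, but not by that of
`Q`, for otherwise the two parts of `Q` could be glued back to `G`. -/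
theorem card_chain_le (hG : ¬G.cutwidth ≤ k)
    (hsmall : ∀ H, StrongImmersion H G → Nat.card H.V < Nat.card G.V → H.cutwidth ≤ k) {M t : ℕ}
    {P : Fin (M + 1) → Set G.V} (hP : StrictMono P) (hδ : ∀ i, G.delta (P i) = t)
    (hcut : ∀ i j S, P i ⊆ S → S ⊆ P j → t ≤ G.delta S) :
    M ≤ Nat.card (Interface k (numBuckets k t) t) := by
  have hstep (n : Fin M) : P n.castSucc ⊂ P n.succ := hP n.castSucc_lt_succ
  choose y hy using fun (n : Fin M) (x : Fin t ≃ G.cut (P n.castSucc)) ↦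
    exists_linkage (hstep n).subset (hδ _) (hδ _) (hcut _ _) x
  have hcard : Nat.card (G.cut (P 0)) = t := hδ 0
  let x (n : Fin (M + 1)) : Fin t ≃ G.cut (P n) :=
    n.induction (finCongr hcard.symm |>.trans (Finite.equivFin _).symm) y
  have L (n : Fin M) : Linkage (x n.castSucc) (x n.succ) := (hy n (x n.castSucc)).some
  let inner (n : Fin (M + 1)) : Set (Interface k (numBuckets k t) t) :=
    {I | (G.induce (P n)).Admits (innerEnd ∘ x n) false I}
  have hanti : Antitone inner := Fin.antitone_iff_succ_le.2 fun n I hI ↦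
    Admits.of_cutDominated hI ((L n).cutDominated (hstep n).subset)
  have hex (n : Fin M) : ∃ I, I ∈ inner n.castSucc ∧ I ∉ inner n.succ := by
    obtain ⟨I, hIP, hIQ⟩ := exists_admits_of_cutwidth_join_le <|
      hsmall _ ((L n).strongImmersion (hstep n).subset) (card_V_join_lt (hstep n))
    exact ⟨I, hIP, fun hI ↦ hG (cutwidth_le_of_join (x n.succ) (hI.cutwidth_join_le hIQ))⟩
  choose I hI hI' using hex
  have hne {n n' : Fin M} (h : n < n') : I n ≠ I n' := fun heq ↦
    hI' n (hanti (Fin.succ_le_castSucc_iff.2 h) (heq ▸ hI n'))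
  have hinj : Injective I := .of_lt_imp_ne fun _ _ ↦ hne
  simpa using Nat.card_le_card_of_injective I hinj

theorem card_V_lt_of_interface {w L : ℕ} (hG : ¬G.cutwidth ≤ k)
    (hsmall : ∀ H, StrongImmersion H G → Nat.card H.V < Nat.card G.V → H.cutwidth ≤ k)
    (hw : G.cutwidth ≤ w)
    (hL : ∀ t ≤ w, Nat.card (Interface k (numBuckets k t) t) + 2 ≤ L) :
    Nat.card G.V < L ^ (w + 1) := by
  obtain ⟨M, rfl⟩ : ∃ M, L = M + 1 := ⟨L - 1, by have := hL 0 w.zero_le; lia⟩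
  by_contra! hlarge
  obtain ⟨t, ht, P, hP, hδ, hcut⟩ := exists_chain_of_cutwidth_le hw hlarge
  have := card_chain_le hG hsmall hP hδ hcut
  have := hL t ht
  lia

/-! ### Degrees, edges and minimal obstructions -/

theorem WidthLE.degree_le {ρ : G.V → α} (h : G.WidthLE ρ k) (v : G.V) : G.degree v ≤ 2 * k := by
  have hsub : {e | (G.ends e).1 = v ∨ (G.ends e).2 = v} ⊆
      G.cut {u | ρ u ≤ ρ v} ∪ G.cut {u | ρ u < ρ v} := by
    intro e he
    have hne : ρ (G.ends e).1 ≠ ρ (G.ends e).2 := h.1.ne (G.loopless e)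
    simp only [cut, mem_union, mem_ofPred_eq]
    grind
  calc G.degree v ≤ G.delta {u | ρ u ≤ ρ v} + G.delta {u | ρ u < ρ v} :=
        (ncard_le_ncard hsub).trans (ncard_union_le ..)
    _ ≤ 2 * k := by
        grw [h.delta_le (isInitial_le _), h.delta_le (isInitial_lt _), two_mul]

theorem WidthLE.card_E_le {ρ : G.V → α} (h : G.WidthLE ρ k) :
    Nat.card G.E ≤ k * Nat.card G.V := by
  have := Fintype.ofFinite G.V
  have hcover : univ ⊆ ⋃ v ∈ Finset.univ, G.cut {u | ρ u ≤ ρ v} := by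
    intro e _
    have hne : ρ (G.ends e).1 ≠ ρ (G.ends e).2 := h.1.ne (G.loopless e)
    simp only [mem_iUnion, Finset.mem_univ, exists_prop, true_and]
    obtain hlt | hgt := hne.lt_or_gt
    · exact ⟨(G.ends e).1, by simp [cut, hlt.not_ge]⟩
    · exact ⟨(G.ends e).2, by simp [cut, hgt.not_ge]⟩
  calc Nat.card G.E = (univ : Set G.E).ncard := (ncard_univ _).symm
    _ ≤ ∑ v, G.delta {u | ρ u ≤ ρ v} :=
        (ncard_le_ncard hcover).trans (Finset.set_ncard_biUnion_le ..)
    _ ≤ ∑ _ : G.V, k := Finset.sum_le_sum fun v _ ↦ h.2 v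
    _ = k * Nat.card G.V := by simp [Nat.card_eq_fintype_card, mul_comm]

theorem delta_le_delta_deleteEdges_add_ncard (F : Set G.E) (S : Set G.V) :
    G.delta S ≤ (G.deleteEdges F).delta S + F.ncard := by
  have hsub : G.cut S ⊆ (Subtype.val '' ((G.deleteEdges F).cut S)) ∪ F := fun e he ↦
    or_iff_not_imp_right.2 fun heF ↦ ⟨⟨e, heF⟩, he, rfl⟩
  exact (ncard_le_ncard hsub).trans <| (ncard_union_le ..).trans <|
    Nat.add_le_add_right ncard_image_le _

theorem cutwidth_le_of_deleteEdges {F : Set G.E} (h : (G.deleteEdges F).cutwidth ≤ k) :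
    G.cutwidth ≤ k + F.ncard := by
  obtain ⟨ρ, hρ, hwidth⟩ := cutwidth_le_iff.1 h
  exact WidthLE.cutwidth_le (ρ := ρ) ⟨hρ, fun v ↦
    (delta_le_delta_deleteEdges_add_ncard F _).trans (Nat.add_le_add_right (hwidth v) _)⟩

theorem cutwidth_le_of_isEmpty_E [IsEmpty G.E] : G.cutwidth ≤ k :=
  WidthLE.cutwidth_le (ρ := Finite.equivFin G.V)
    ⟨(Finite.equivFin G.V).injective, fun v ↦ by simp [delta, eq_empty_of_isEmpty]⟩

theorem cutwidth_le_succ_of_mem_obstructions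
    (hG : G ∈ obstructions StrongImmersion (cutwidthClass k)) : G.cutwidth ≤ k + 1 := by
  obtain hE | ⟨⟨e⟩⟩ := isEmpty_or_nonempty G.E
  · exact cutwidth_le_of_isEmpty_E
  · have hcard : Nat.card (G.deleteEdges {e}).E < Nat.card G.E :=
      Finite.card_subtype_lt (not_not.2 (mem_singleton e))
    simpa using cutwidth_le_of_deleteEdges (F := {e}) <|
      hG.2 _ (strongImmersion_deleteEdges {e}) fun h ↦ hcard.ne h.card_E_eq

/-! ### The size of minimal obstructions -/

theorem numBuckets_mono : Monotone (numBuckets k) := fun _ _ h ↦ by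
  unfold numBuckets
  gcongr

theorem sq_card_interface_add_two_le (k : ℕ) :
    ((numBuckets k (k + 1) ^ (k + 1)) ^ 2 * (k + 1) ^ numBuckets k (k + 1) + 2) ^ 2 ≤
      ((2 * k + 3) * (2 * k + 6)) ^ (2 * (k + 1)) *
        (k + 2) ^ (2 * ((2 * k + 3) * (2 * k + 6))) := by
  set ℓ := (2 * k + 3) * (2 * k + 6) with hℓ
  set m := numBuckets k (k + 1) with hm
  have hm' : m = 2 * k ^ 2 + 5 * k + 4 := by rw [hm, numBuckets]; ring
  have hmℓ : m ≤ ℓ := by rw [hm', hℓ]; lia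
  have hmk : m ≤ (k + 2) ^ 3 := by rw [hm']; lia
  have hk : 9 ≤ (k + 2) ^ 4 := by
    calc 9 ≤ 2 ^ 4 := by norm_num
      _ ≤ (k + 2) ^ 4 := by gcongr; lia
  have hexp : 4 + 6 * (k + 1) + 2 * m ≤ 2 * ℓ := by rw [hm', hℓ]; lia
  have hone : 1 ≤ (m ^ (k + 1)) ^ 2 * (k + 1) ^ m := Nat.pos_of_ne_zero (by simp [hm'])
  calc ((m ^ (k + 1)) ^ 2 * (k + 1) ^ m + 2) ^ 2
      ≤ (3 * ((m ^ (k + 1)) ^ 2 * (k + 1) ^ m)) ^ 2 := by gcongr; lia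
    _ = m ^ (2 * (k + 1)) * (9 * m ^ (2 * (k + 1)) * (k + 1) ^ (2 * m)) := by ring
    _ ≤ ℓ ^ (2 * (k + 1)) * ((k + 2) ^ 4 * ((k + 2) ^ 3) ^ (2 * (k + 1)) * (k + 2) ^ (2 * m)) := by
        gcongr
        lia
    _ = ℓ ^ (2 * (k + 1)) * (k + 2) ^ (4 + 6 * (k + 1) + 2 * m) := by
        rw [← pow_mul, ← pow_add, ← pow_add]
        ring_nf
    _ ≤ ℓ ^ (2 * (k + 1)) * (k + 2) ^ (2 * ℓ) := by
        gcongr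
        lia

theorem two_rpow_eq_natCast {ℓ : ℕ} (hℓ : 0 < ℓ) (k : ℕ) :
    (2 : ℝ) ^ (2 * (((k : ℝ) + 1) * Real.logb 2 ℓ + (ℓ : ℝ) * Real.logb 2 ((k : ℝ) + 2))) =
      (ℓ ^ (2 * (k + 1)) * (k + 2) ^ (2 * ℓ) : ℕ) := by
  have hexp : 2 * (((k : ℝ) + 1) * Real.logb 2 ℓ + (ℓ : ℝ) * Real.logb 2 ((k : ℝ) + 2)) =
      Real.logb 2 ℓ * (2 * (k + 1) : ℕ) + Real.logb 2 ((k : ℝ) + 2) * (2 * ℓ : ℕ) := by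
    push_cast
    ring
  rw [hexp, Real.rpow_add (by norm_num), Real.rpow_mul_natCast (by norm_num),
    Real.rpow_mul_natCast (by norm_num), Real.rpow_logb (by norm_num) (by norm_num) (by positivity),
    Real.rpow_logb (by norm_num) (by norm_num) (by positivity)]
  push_cast
  rfl

theorem card_V_le_of_mem_obstructions
    (hG : G ∈ obstructions StrongImmersion (cutwidthClass k)) {ℓ : ℕ}
    (hℓ : ℓ = (2 * k + 3) * (2 * k + 6)) :
    Nat.card G.V ≤ (ℓ ^ (2 * (k + 1)) * (k + 2) ^ (2 * ℓ)) ^ (k + 1) := by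
  set m := numBuckets k (k + 1)
  set L := (m ^ (k + 1)) ^ 2 * (k + 1) ^ m + 2
  have hsmall (H) (hH : StrongImmersion H G) (hlt : Nat.card H.V < Nat.card G.V) :
      H.cutwidth ≤ k := hG.2 H hH fun h ↦ hlt.ne h.card_V_eq
  have hL (t) (ht : t ≤ k + 1) : Nat.card (Interface k (numBuckets k t) t) + 2 ≤ L := by
    have hm : numBuckets k t ≤ m := numBuckets_mono ht
    have hm₀ : 0 < m := Nat.succ_pos _
    grw [Interface.card_le, hm, ht]
    · exact hm₀
    · lia
  calc Nat.card G.V ≤ L ^ (k + 2) :=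
        (card_V_lt_of_interface hG.1 hsmall (cutwidth_le_succ_of_mem_obstructions hG) hL).le
    _ ≤ L ^ (2 * (k + 1)) := Nat.pow_le_pow_right (by lia) (by lia)
    _ = (L ^ 2) ^ (k + 1) := pow_mul ..
    _ ≤ (ℓ ^ (2 * (k + 1)) * (k + 2) ^ (2 * ℓ)) ^ (k + 1) := by
        gcongr
        exact hℓ ▸ sq_card_interface_add_two_le k

end Multigraph

open Multigraph in
/-- every minimal strong-immersion obstruction for cutwidth at most `k`
has at most `N^(k+1)` vertices and at most `(k+1)·N^(k+1)` edges; in particular every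
vertex has degree at most `2(k+1)`. -/
theorem cutwidth_obstruction_size_bound
    (k : ℕ) (hk : 1 ≤ k) (ℓ : ℕ) (hℓ : ℓ = (2 * k + 3) * (2 * k + 6))
    (N : ℝ)
    (hN : N = (2 : ℝ) ^ (2 * (((k : ℝ) + 1) * Real.logb 2 (ℓ : ℝ)
                + (ℓ : ℝ) * Real.logb 2 ((k : ℝ) + 2))) + 2)
    (G : Multigraph)
    (hG : G ∈ obstructions StrongImmersion (cutwidthClass k)) :
    (Nat.card G.V : ℝ) ≤ N ^ (k + 1) ∧
    (Nat.card G.E : ℝ) ≤ ((k : ℝ) + 1) * N ^ (k + 1) ∧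
    (∀ v : G.V, G.degree v ≤ 2 * (k + 1)) := by
  obtain ⟨ρ, hρ⟩ := cutwidth_le_iff.1 (cutwidth_le_succ_of_mem_obstructions hG)
  have hℓ₀ : 0 < ℓ := hℓ ▸ by positivity
  have hV : (Nat.card G.V : ℝ) ≤ N ^ (k + 1) := by
    calc (Nat.card G.V : ℝ) ≤ ((ℓ ^ (2 * (k + 1)) * (k + 2) ^ (2 * ℓ) : ℕ) : ℝ) ^ (k + 1) :=
          mod_cast card_V_le_of_mem_obstructions hG hℓ
      _ ≤ N ^ (k + 1) := by
          rw [hN, two_rpow_eq_natCast hℓ₀]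
          gcongr
          simp
  refine ⟨hV, ?_, hρ.degree_le⟩
  calc (Nat.card G.E : ℝ) ≤ ((k : ℝ) + 1) * Nat.card G.V := mod_cast hρ.card_E_le
    _ ≤ ((k : ℝ) + 1) * N ^ (k + 1) := by gcongr
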